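/- arXiv:math/0508276 — 6 statements merged into one kernel-verified Lean document; each statement's English description precedes it below -/
import Mathlib

section
/- Under Assumption 3.1, run the greedy boosting algorithm with numbers h_k satisfying |ᾱ_k| ≤ h_k ∈ Λ_k and s_k = ‖f_0‖₁ + Σ_{i=0}^{k−1} h_i, and set ε̄_k = (h_k²/2)·M(s_{k+1}) + ε_k. If Σ_{j=0}^{∞} ε̄_j < ∞ and Σ_{j=0}^{∞} h_j = ∞, then lim_{k→∞} A(f_k) = inf_{f ∈ span(S)} A(f). -/
/-!
Fix a competitor `q ∈ span S`. A second order Taylor bound along the directions `±b`, `b ∈ S`,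
turns the approximate greedy minimization into
`h k * |∇A (f k) b| ≤ A (f k) - A (f (k+1)) + ε̄ k` (`greedy_step`). Writing `f k - q` as a
combination of elements of `S` of total weight at most `W k = C + ∑ i < k, h i`, and using the
gradient inequality for the convex function `A`, this yields
`h k * (A (f k) - A q) ≤ W k * (A (f k) - A (f (k+1)) + ε̄ k)`.

If `A (f k) - A q` stayed above some `δ > 0`, then, because `log W (k+1) - log W k ≤ h k / W k`,
the quantity `A (f k) + δ * log (W k) - ∑ i < k, ε̄ i` would be nonincreasing, which is impossible
as `W k → ∞` and `∑ ε̄` converges. So `A (f k)` gets below `A q + δ` at arbitrarily late times, and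
since `A (f (k+1)) ≤ A (f k) + ε̄ k` with summable `ε̄`, it eventually stays below `A q + 2 δ`
(`eventually_le_of_recursion`). The lower bound `inf A ≤ A (f k)` is immediate.
-/

open Filter Finset Set

variable {V : Type*} [AddCommGroup V] [Module ℝ V]

/-- The 1-norm `‖f‖₁` of `f` with respect to the basis set `S`: the infimum of `∑ |wʲ|`
over all representations `f = ∑ wʲ fʲ` with `fʲ ∈ S`. -/
noncomputable def norm1 (S : Set V) (f : V) : ℝ :=
  sInf {c : ℝ | ∃ (n : ℕ) (w : Fin n → ℝ) (g : Fin n → V),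
    (∀ i, g i ∈ S) ∧ f = ∑ i, w i • g i ∧ c = ∑ i, |w i|}

/-- Assumption 3.1: `A` is convex on `span S`, differentiable with gradient `∇A` (a linear
functional), and for `f ∈ span S`, `g ∈ S` the function `h ↦ A (f + h g)` is twice
differentiable with second derivative at `0` bounded by `M (‖f‖₁)`, `M` nondecreasing. -/
structure Assumption31 (S : Set V) (A : V → ℝ) (M : ℝ → ℝ) : Prop where
  convexOn : ConvexOn ℝ (Submodule.span ℝ S : Set V) A
  differentiable : ∃ G : V → V →ₗ[ℝ] ℝ, ∀ f ∈ Submodule.span ℝ S, ∀ g ∈ Submodule.span ℝ S,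
    Filter.Tendsto (fun h : ℝ => (A (f + h • g) - A f) / h)
      (nhdsWithin (0 : ℝ) {(0 : ℝ)}ᶜ) (nhds (G f g))
  mono : Monotone M
  secondDeriv : ∀ f ∈ Submodule.span ℝ S, ∀ g ∈ S, ∃ d1 d2 : ℝ → ℝ,
    (∀ h : ℝ, HasDerivAt (fun t : ℝ => A (f + t • g)) (d1 h) h) ∧
    (∀ h : ℝ, HasDerivAt d1 (d2 h) h) ∧ d2 0 ≤ M (norm1 S f)

/-- Algorithm 2.1 (greedy boosting): `f 0 ∈ span S`; at step `k`, `Λ k` is a closed symmetric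
subset of `ℝ` containing `0`, `α k ∈ Λ k`, `g k ∈ S`, `f (k+1) = f k + α k • g k`, and
`(α k, g k)` approximately minimizes `A (f k + a • b)` over `a ∈ Λ k`, `b ∈ S` up to `ε k ≥ 0`. -/
structure GreedyBoosting (S : Set V) (A : V → ℝ) (f : ℕ → V) (α : ℕ → ℝ) (g : ℕ → V)
    (Λ : ℕ → Set ℝ) (ε : ℕ → ℝ) : Prop where
  init_mem : f 0 ∈ Submodule.span ℝ S
  lambda_closed : ∀ k, IsClosed (Λ k)
  lambda_zero : ∀ k, (0 : ℝ) ∈ Λ k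
  lambda_symm : ∀ k, ∀ a ∈ Λ k, -a ∈ Λ k
  eps_nonneg : ∀ k, 0 ≤ ε k
  alpha_mem : ∀ k, α k ∈ Λ k
  g_mem : ∀ k, g k ∈ S
  step : ∀ k, f (k + 1) = f k + α k • g k
  approx_min : ∀ k, ∀ a ∈ Λ k, ∀ b ∈ S, A (f (k + 1)) ≤ A (f k + a • b) + ε k

/-- `HasRep S v c`: `v` is a finite linear combination of elements of `S` whose coefficients have
absolute values summing to `c`. Thus `norm1 S v` is the infimum of such `c`. -/
def HasRep (S : Set V) (v : V) (c : ℝ) : Prop :=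
  ∃ (n : ℕ) (w : Fin n → ℝ) (g : Fin n → V),
    (∀ i, g i ∈ S) ∧ v = ∑ i, w i • g i ∧ c = ∑ i, |w i|

lemma HasRep.nonneg {S : Set V} {v : V} {c : ℝ} (hv : HasRep S v c) : 0 ≤ c := by
  obtain ⟨n, w, g, -, -, rfl⟩ := hv
  positivity

lemma hasRep_zero (S : Set V) : HasRep S 0 0 :=
  ⟨0, Fin.elim0, Fin.elim0, fun i => i.elim0, by simp, by simp⟩

lemma hasRep_smul_mem {S : Set V} {b : V} (hb : b ∈ S) (a : ℝ) : HasRep S (a • b) |a| :=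
  ⟨1, fun _ => a, fun _ => b, fun _ => hb, by simp, by simp⟩

lemma HasRep.add {S : Set V} {v u : V} {c d : ℝ} (hv : HasRep S v c) (hu : HasRep S u d) :
    HasRep S (v + u) (c + d) := by
  obtain ⟨n, w, g, hg, rfl, rfl⟩ := hv
  obtain ⟨m, w', g', hg', rfl, rfl⟩ := hu
  refine ⟨n + m, Fin.append w w', Fin.append g g', ?_, ?_, ?_⟩
  · intro i
    refine Fin.addCases (fun j => ?_) (fun j => ?_) i
    · simpa using hg j
    · simpa using hg' j
  · simp [Fin.sum_univ_add]
  · simp [Fin.sum_univ_add]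

lemma HasRep.smul {S : Set V} {v : V} {c : ℝ} (hv : HasRep S v c) (a : ℝ) :
    HasRep S (a • v) (|a| * c) := by
  obtain ⟨n, w, g, hg, rfl, rfl⟩ := hv
  exact ⟨n, fun i => a * w i, g, hg, by simp [Finset.smul_sum, mul_smul],
    by simp [Finset.mul_sum, abs_mul]⟩

lemma HasRep.sub {S : Set V} {v u : V} {c d : ℝ} (hv : HasRep S v c) (hu : HasRep S u d) :
    HasRep S (v - u) (c + d) := by
  simpa [sub_eq_add_neg] using hv.add (hu.smul (-1))

lemma exists_hasRep {S : Set V} {v : V} (hv : v ∈ Submodule.span ℝ S) : ∃ c, HasRep S v c := by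
  induction hv using Submodule.span_induction with
  | mem x hx => exact ⟨_, by simpa using hasRep_smul_mem hx 1⟩
  | zero => exact ⟨0, hasRep_zero S⟩
  | add x y _ _ hx hy =>
    obtain ⟨c, hc⟩ := hx
    obtain ⟨d, hd⟩ := hy
    exact ⟨_, hc.add hd⟩
  | smul a x _ hx =>
    obtain ⟨c, hc⟩ := hx
    exact ⟨_, hc.smul a⟩

/-- A linear functional bounded by `B` on `S` is bounded by `c * B` on combinations of weight `c`. -/
lemma HasRep.abs_le {S : Set V} {v : V} {c B : ℝ} (hv : HasRep S v c) (L : V →ₗ[ℝ] ℝ)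
    (hB : ∀ b ∈ S, |L b| ≤ B) : |L v| ≤ c * B := by
  obtain ⟨n, w, g, hg, rfl, rfl⟩ := hv
  rw [map_sum, Finset.sum_mul]
  refine (Finset.abs_sum_le_sum_abs _ _).trans (Finset.sum_le_sum fun i _ => ?_)
  rw [map_smul, smul_eq_mul, abs_mul]
  exact mul_le_mul_of_nonneg_left (hB _ (hg i)) (abs_nonneg _)

lemma norm1_le {S : Set V} {v : V} {c : ℝ} (hv : HasRep S v c) : norm1 S v ≤ c :=
  csInf_le ⟨0, fun _ hd => HasRep.nonneg hd⟩ hv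

lemma norm1_nonneg (S : Set V) (v : V) : 0 ≤ norm1 S v :=
  Real.sInf_nonneg fun _ hd => HasRep.nonneg hd

lemma norm1_add_smul_le {S : Set V} {v b : V} (hv : v ∈ Submodule.span ℝ S) (hb : b ∈ S)
    (t : ℝ) : norm1 S (v + t • b) ≤ norm1 S v + |t| := by
  rw [← sub_le_iff_le_add]
  refine le_csInf (exists_hasRep hv) fun c hc => ?_
  rw [sub_le_iff_le_add]
  exact norm1_le (HasRep.add hc (hasRep_smul_mem hb t))

lemma taylor_le {φ d1 d2 : ℝ → ℝ} {K r : ℝ} (hr : 0 ≤ r)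
    (h1 : ∀ t, HasDerivAt φ (d1 t) t) (h2 : ∀ t, HasDerivAt d1 (d2 t) t)
    (hK : ∀ t ∈ Set.Icc 0 r, d2 t ≤ K) : φ r ≤ φ 0 + r * d1 0 + r ^ 2 / 2 * K := by
  have hd1 : ∀ t ∈ Set.Icc 0 r, d1 t ≤ d1 0 + K * t := by
    refine image_le_of_deriv_right_le_deriv_boundary (f' := d2) (B' := fun _ => K)
      (fun t _ => (h2 t).continuousAt.continuousWithinAt)
      (fun t _ => (h2 t).hasDerivWithinAt) (by simp) (by fun_prop) (fun t _ => ?_)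
      (fun t ht => hK t ⟨ht.1, ht.2.le⟩)
    simpa using ((((hasDerivAt_id t).const_mul K).const_add (d1 0))).hasDerivWithinAt
  have hφ : ∀ t ∈ Set.Icc 0 r, φ t ≤ φ 0 + t * d1 0 + t ^ 2 / 2 * K := by
    refine image_le_of_deriv_right_le_deriv_boundary (f' := d1) (B' := fun t => d1 0 + K * t)
      (fun t _ => (h1 t).continuousAt.continuousWithinAt)
      (fun t _ => (h1 t).hasDerivWithinAt) (by simp) (by fun_prop) (fun t _ => ?_)
      (fun t ht => hd1 t ⟨ht.1, ht.2.le⟩)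
    have h3 := ((((hasDerivAt_id t).mul_const (d1 0)).const_add (φ 0)).add
      ((((hasDerivAt_id t).pow 2).div_const 2).mul_const K)).hasDerivWithinAt (s := Set.Ici t)
    refine HasDerivWithinAt.congr_deriv h3 ?_
    norm_num
    ring
  exact hφ r ⟨hr, le_rfl⟩

section Assumption

variable {S : Set V} {A : V → ℝ} {M : ℝ → ℝ}

/-- The bound on the second derivative at the base point transfers to every point of the line,
because the base point may be moved along the line. -/
lemma secondDeriv_le (hA : Assumption31 S A M) {v b : V} (hv : v ∈ Submodule.span ℝ S)
    (hb : b ∈ S) {d1 d2 : ℝ → ℝ}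
    (h1 : ∀ t : ℝ, HasDerivAt (fun u : ℝ => A (v + u • b)) (d1 t) t)
    (h2 : ∀ t : ℝ, HasDerivAt d1 (d2 t) t) (t : ℝ) : d2 t ≤ M (norm1 S v + |t|) := by
  have hmem : v + t • b ∈ Submodule.span ℝ S :=
    add_mem hv (Submodule.smul_mem _ _ (Submodule.subset_span hb))
  obtain ⟨e1, e2, he1, he2, he⟩ := hA.secondDeriv _ hmem b hb
  have hfun : (fun u : ℝ => A (v + t • b + u • b)) = fun u => A (v + (t + u) • b) := by
    funext u
    rw [add_smul, add_assoc]
  have hE1 : e1 = fun u => d1 (t + u) := by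
    funext u
    refine (he1 u).unique ?_
    rw [hfun]
    exact (h1 (t + u)).comp_const_add t u
  have hE2 : e2 0 = d2 t := by
    refine (he2 0).unique ?_
    rw [hE1]
    simpa using (h2 (t + 0)).comp_const_add t 0
  rw [← hE2]
  exact he.trans (hA.mono (norm1_add_smul_le hv hb t))

lemma taylor_dir_le (hA : Assumption31 S A M) {L : V →ₗ[ℝ] ℝ} {v b : V}
    (hv : v ∈ Submodule.span ℝ S) (hb : b ∈ S)
    (hL : Tendsto (fun h : ℝ => (A (v + h • b) - A v) / h)
      (nhdsWithin (0 : ℝ) {(0 : ℝ)}ᶜ) (nhds (L b))) {r : ℝ} (hr : 0 ≤ r) :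
    A (v + r • b) ≤ A v + r * L b + r ^ 2 / 2 * M (norm1 S v + r) ∧
    A (v + (-r) • b) ≤ A v - r * L b + r ^ 2 / 2 * M (norm1 S v + r) := by
  obtain ⟨d1, d2, h1, h2, -⟩ := hA.secondDeriv v hv b hb
  have hd : d1 0 = L b := by
    have h3 := hasDerivAt_iff_tendsto_slope_zero.1 (h1 0)
    refine tendsto_nhds_unique h3 (hL.congr fun t => ?_)
    simp [div_eq_inv_mul]
  have hK : ∀ t, |t| ≤ r → d2 t ≤ M (norm1 S v + r) := fun t ht =>
    (secondDeriv_le hA hv hb h1 h2 t).trans (hA.mono (by linarith))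
  constructor
  · have := taylor_le hr h1 h2 (fun t ht => hK t (by rw [abs_of_nonneg ht.1]; exact ht.2))
    simpa [hd] using this
  · have h1n : ∀ t, HasDerivAt (fun u : ℝ => A (v + (-u) • b)) (-d1 (-t)) t := fun t => by
      simpa [Function.comp_def] using (h1 (-t)).scomp t (hasDerivAt_neg t)
    have h2n : ∀ t, HasDerivAt (fun u : ℝ => -d1 (-u)) (d2 (-t)) t := fun t => by
      have h3 := ((h2 (-t)).scomp t (hasDerivAt_neg t)).neg
      exact h3.congr_deriv (by simp)
    have := taylor_le hr h1n h2n
      (fun t ht => hK (-t) (by rw [abs_neg, abs_of_nonneg ht.1]; exact ht.2))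
    simp only [neg_zero, zero_smul, add_zero, hd] at this
    linarith

/-- The gradient inequality for the convex function `A` on `span S`. -/
lemma gradient_ineq (hA : Assumption31 S A M) {L : V →ₗ[ℝ] ℝ} {v q : V}
    (hv : v ∈ Submodule.span ℝ S) (hq : q ∈ Submodule.span ℝ S)
    (hL : Tendsto (fun h : ℝ => (A (v + h • (q - v)) - A v) / h)
      (nhdsWithin (0 : ℝ) {(0 : ℝ)}ᶜ) (nhds (L (q - v)))) :
    L (q - v) ≤ A q - A v := by
  have hL' := hL.mono_left (nhdsWithin_mono (0 : ℝ) (s := Set.Ioi 0) fun x hx => ne_of_gt hx)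
  refine le_of_tendsto hL' ?_
  filter_upwards [Ioo_mem_nhdsGT (zero_lt_one' ℝ)] with t ht
  have hc := hA.convexOn.2 hv hq (sub_nonneg.2 ht.2.le) ht.1.le (by ring)
  have heq : (1 - t) • v + t • q = v + t • (q - v) := by
    rw [smul_sub, sub_smul, one_smul]
    abel
  rw [heq, smul_eq_mul, smul_eq_mul] at hc
  rw [div_le_iff₀ ht.1]
  linarith

/-- Convexity forces the second derivative bound `M` to be nonnegative on `[0, ∞)`. -/
lemma M_nonneg (hA : Assumption31 S A M) {b : V} (hb : b ∈ S) {x : ℝ} (hx : 0 ≤ x) :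
    0 ≤ M x := by
  obtain ⟨d1, d2, h1, h2, hle⟩ := hA.secondDeriv 0 (zero_mem _) b hb
  have hconv : ConvexOn ℝ Set.univ (fun t : ℝ => A (0 + t • b)) := by
    refine ⟨convex_univ, fun x _ y _ c d hc hd hcd => ?_⟩
    have hbs := Submodule.subset_span (R := ℝ) hb
    have := hA.convexOn.2 (Submodule.smul_mem _ x hbs) (Submodule.smul_mem _ y hbs) hc hd hcd
    simpa [smul_smul, add_smul] using this
  have hmono : Monotone d1 := by
    have hm := hconv.monotoneOn_deriv (fun t _ => (h1 t).differentiableAt)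
    intro x y hxy
    have hxy' := hm (Set.mem_univ x) (Set.mem_univ y) hxy
    rwa [(h1 x).deriv, (h1 y).deriv] at hxy'
  have h0 : 0 ≤ d2 0 := by
    rw [← (h2 0).deriv]
    exact hmono.deriv_nonneg
  have hn : norm1 S (0 : V) ≤ x := (norm1_le (hasRep_zero S)).trans hx
  exact h0.trans (hle.trans (hA.mono hn))

end Assumption

/-- The real-sequence core of the argument: `a` may increase by at most the summable `e`, and
decreases at rate `h k / W k` times its excess over `c`, where `W k = C + ∑ i < k, h i → ∞`. -/
lemma eventually_le_of_recursion {a e h : ℕ → ℝ} {c C δ : ℝ} (hC : 0 < C) (hδ : 0 < δ)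
    (hh : ∀ k, 0 ≤ h k) (he : ∀ k, 0 ≤ e k) (hsum : Summable e)
    (hdiv : Tendsto (fun n => ∑ j ∈ Finset.range n, h j) atTop atTop)
    (hstep : ∀ k, a (k + 1) ≤ a k + e k)
    (hrec : ∀ k, h k * (a k - c) ≤
      (C + ∑ i ∈ Finset.range k, h i) * (a k - a (k + 1) + e k)) :
    ∀ᶠ k in atTop, a k < c + 2 * δ := by
  set E : ℕ → ℝ := fun n => ∑ i ∈ Finset.range n, e i with hE
  set W : ℕ → ℝ := fun n => C + ∑ i ∈ Finset.range n, h i with hW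
  have hWpos : ∀ k, 0 < W k := fun k =>
    add_pos_of_pos_of_nonneg hC (Finset.sum_nonneg fun i _ => hh i)
  have hEle : ∀ n, E n ≤ ∑' i, e i := fun n => hsum.sum_le_tsum _ fun i _ => he i
  have hanti : Antitone fun k => a k - E k := antitone_nat_of_succ_le fun k => by
    have := hstep k
    simp only [hE, Finset.sum_range_succ]
    linarith
  obtain ⟨N, hN⟩ : ∃ N, ∑' i, e i - δ < E N :=
    (hsum.hasSum.tendsto_sum_nat.eventually_const_lt (sub_lt_self _ hδ)).exists
  by_cases hex : ∃ k ≥ N, a k ≤ c + δ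
  · obtain ⟨k, hk, hak⟩ := hex
    filter_upwards [eventually_ge_atTop k] with n hn
    have h1 : a n - E n ≤ a k - E k := hanti hn
    have h2 : E N ≤ E k :=
      Finset.sum_le_sum_of_subset_of_nonneg (Finset.range_mono hk) fun i _ _ => he i
    linarith [hEle n]
  · exfalso
    push Not at hex
    -- The logarithm of `W` makes the total decrease `∑ h k / W k` telescope.
    have hmain : ∀ n ≥ N, a n - E n + δ * Real.log (W n) ≤ a N - E N + δ * Real.log (W N) := by
      intro n hn
      induction n, hn using Nat.le_induction with
      | base => exact le_rfl
      | succ n hn ih =>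
        refine le_trans ?_ ih
        have hWs : W (n + 1) = W n + h n := by
          simp only [hW, Finset.sum_range_succ]
          ring
        have hlog : Real.log (W (n + 1)) - Real.log (W n) ≤ h n / W n := by
          rw [← Real.log_div (hWpos _).ne' (hWpos _).ne']
          refine (Real.log_le_sub_one_of_pos (div_pos (hWpos _) (hWpos _))).trans_eq ?_
          rw [hWs]
          field_simp [(hWpos n).ne']
          ring
        have hdec : δ * (h n / W n) ≤ a n - a (n + 1) + e n := by
          rw [mul_div_assoc', div_le_iff₀ (hWpos n)]
          have h1 := hrec n
          have h2 : h n * δ ≤ h n * (a n - c) :=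
            mul_le_mul_of_nonneg_left (by linarith [hex n hn]) (hh n)
          change _ ≤ W n * _ at h1
          linarith
        have hEs : E (n + 1) = E n + e n := Finset.sum_range_succ _ _
        have := mul_le_mul_of_nonneg_left hlog hδ.le
        rw [hEs]
        linarith
    have hWtop : Tendsto (fun n => δ * Real.log (W n)) atTop atTop :=
      (Real.tendsto_log_atTop.comp (tendsto_atTop_add_const_left _ C hdiv)).const_mul_atTop hδ
    obtain ⟨n, hn1, hn2⟩ := ((hWtop.eventually_gt_atTop
      (a N - E N + δ * Real.log (W N) - (c + δ) + ∑' i, e i)).and (eventually_ge_atTop N)).exists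
    linarith [hmain n hn2, hex n hn2, hEle n]

/-- One greedy step decreases `A` at least as much, up to the error terms, as the step `±h k` along
any direction of `S` does to first order. -/
lemma greedy_step {S : Set V} {A : V → ℝ} {M : ℝ → ℝ} (hA : Assumption31 S A M)
    {v v' : V} {Λ : Set ℝ} {ε h s' : ℝ} (hv : v ∈ Submodule.span ℝ S)
    (hmin : ∀ a ∈ Λ, ∀ b ∈ S, A v' ≤ A (v + a • b) + ε)
    (hsymm : ∀ a ∈ Λ, -a ∈ Λ) (hh : 0 ≤ h) (hΛ : h ∈ Λ) (hs : norm1 S v + h ≤ s')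
    {L : V →ₗ[ℝ] ℝ} {b : V} (hb : b ∈ S)
    (hL : Tendsto (fun h : ℝ => (A (v + h • b) - A v) / h)
      (nhdsWithin (0 : ℝ) {(0 : ℝ)}ᶜ) (nhds (L b))) :
    |(h • L) b| ≤ A v - A v' + (h ^ 2 / 2 * M s' + ε) := by
  obtain ⟨h1, h2⟩ := taylor_dir_le hA hv hb hL hh
  have h3 := hmin h hΛ b hb
  have h4 := hmin (-h) (hsymm h hΛ) b hb
  have h5 : h ^ 2 / 2 * M (norm1 S v + h) ≤ h ^ 2 / 2 * M s' :=
    mul_le_mul_of_nonneg_left (hA.mono hs) (by positivity)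
  rw [LinearMap.smul_apply, smul_eq_mul, abs_le]
  constructor <;> linarith

/-- Theorem 4.1: if `∑ ε̄ j < ∞` and `∑ h j = ∞`, then `A (f k)` converges to
`inf_{f ∈ span S} A f` (as a limit in the extended reals, since the infimum may be `-∞`). -/
theorem limit_convergence (S : Set V) (A : V → ℝ) (M : ℝ → ℝ)
    (hA : Assumption31 S A M)
    (f : ℕ → V) (α : ℕ → ℝ) (g : ℕ → V) (Λ : ℕ → Set ℝ) (ε : ℕ → ℝ)
    (hboost : GreedyBoosting S A f α g Λ ε)
    (h : ℕ → ℝ) (hα : ∀ k, |α k| ≤ h k) (hΛ : ∀ k, h k ∈ Λ k)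
    (s : ℕ → ℝ) (hs : ∀ k, s k = norm1 S (f 0) + ∑ i ∈ Finset.range k, h i)
    (hεbar : Summable fun j => h j ^ 2 / 2 * M (s (j + 1)) + ε j)
    (hhdiv : Tendsto (fun n => ∑ j ∈ Finset.range n, h j) atTop atTop) :
    Tendsto (fun k => (A (f k) : EReal)) atTop
      (nhds (⨅ q ∈ (Submodule.span ℝ S : Set V), (A q : EReal))) := by
  obtain ⟨G, hG⟩ := hA.differentiable
  have hh : ∀ k, 0 ≤ h k := fun k => (abs_nonneg _).trans (hα k)
  have hmem : ∀ k, f k ∈ Submodule.span ℝ S := by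
    intro k
    induction k with
    | zero => exact hboost.init_mem
    | succ k ih =>
      rw [hboost.step]
      exact add_mem ih (Submodule.smul_mem _ _ (Submodule.subset_span (hboost.g_mem k)))
  have hss : ∀ k, s (k + 1) = s k + h k := fun k => by
    rw [hs, hs, Finset.sum_range_succ, add_assoc]
  have hnorm : ∀ k, norm1 S (f k) ≤ s k := by
    intro k
    induction k with
    | zero => simp [hs]
    | succ k ih =>
      rw [hboost.step, hss]
      exact (norm1_add_smul_le (hmem k) (hboost.g_mem k) _).trans (add_le_add ih (hα k))
  have hMn : ∀ k, 0 ≤ h k ^ 2 / 2 * M (s (k + 1)) := fun k =>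
    mul_nonneg (by positivity)
      (M_nonneg hA (hboost.g_mem 0) ((norm1_nonneg S _).trans (hnorm (k + 1))))
  obtain ⟨R, hR⟩ := exists_hasRep hboost.init_mem
  have hrep : ∀ k, ∃ c ≤ R + ∑ i ∈ Finset.range k, h i, HasRep S (f k) c := by
    intro k
    induction k with
    | zero => exact ⟨R, by simp, hR⟩
    | succ k ih =>
      obtain ⟨c, hc, hrep⟩ := ih
      refine ⟨c + |α k|, ?_, ?_⟩
      · rw [Finset.sum_range_succ]
        linarith [hα k]
      · rw [hboost.step]
        exact hrep.add (hasRep_smul_mem (hboost.g_mem k) _)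
  have hstep : ∀ k, A (f (k + 1)) ≤ A (f k) + (h k ^ 2 / 2 * M (s (k + 1)) + ε k) := fun k => by
    have := hboost.approx_min k 0 (hboost.lambda_zero k) (g k) (hboost.g_mem k)
    rw [zero_smul, add_zero] at this
    linarith [hMn k]
  have key : ∀ q ∈ Submodule.span ℝ S, ∀ δ > 0, ∀ᶠ k in atTop, A (f k) < A q + 2 * δ := by
    intro q hq δ hδ
    obtain ⟨Q, hQ⟩ := exists_hasRep hq
    -- The summand `1` only serves to make the constant strictly positive.
    refine eventually_le_of_recursion (a := fun k => A (f k)) (C := R + Q + 1)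
      (by linarith [hR.nonneg, hQ.nonneg]) hδ hh
      (fun k => add_nonneg (hMn k) (hboost.eps_nonneg k)) hεbar hhdiv hstep fun k => ?_
    obtain ⟨c, hc, hrepk⟩ := hrep k
    have hbound := (hrepk.sub hQ).abs_le (h k • G (f k)) fun b hb =>
      greedy_step hA (hmem k) (hboost.approx_min k) (hboost.lambda_symm k) (hh k) (hΛ k)
        (s' := s (k + 1)) (by rw [hss]; linarith [hnorm k]) hb
        (hG _ (hmem k) b (Submodule.subset_span hb))
    have hgrad := gradient_ineq hA (hmem k) hq (hG _ (hmem k) _ (sub_mem hq (hmem k)))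
    have hneg : G (f k) (f k - q) = -G (f k) (q - f k) := by
      rw [← map_neg, neg_sub]
    calc h k * (A (f k) - A q) ≤ h k * G (f k) (f k - q) :=
          mul_le_mul_of_nonneg_left (by linarith) (hh k)
      _ ≤ _ := (le_abs_self _).trans hbound
      _ ≤ _ := mul_le_mul_of_nonneg_right (by linarith) (by linarith [hstep k])
  rw [tendsto_order]
  constructor
  · intro x hx
    exact Eventually.of_forall fun k => hx.trans_le (iInf₂_le (f k) (hmem k))
  · intro x hx
    obtain ⟨q, hq, hqx⟩ := by simpa only [iInf_lt_iff] using hx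
    obtain ⟨r, hqr, hrx⟩ := EReal.lt_iff_exists_real_btwn.1 hqx
    have hqr' : A q < r := EReal.coe_lt_coe_iff.1 hqr
    filter_upwards [key q hq ((r - A q) / 2) (by linarith)] with k hk
    refine lt_trans (EReal.coe_lt_coe_iff.2 ?_) hrx
    linarith
end

section
/- Suppose in the greedy boosting algorithm each step-size ᾱ_k is an exact line minimizer: A(f_k + ᾱ_k ḡ_k) = inf_{α ∈ ℝ} A(f_k + α ḡ_k). If there is a constant c > 0 such that inf_k inf_{ξ ∈ (0,1)} A''_{(1−ξ)f_k + ξ f_{k+1}, ḡ_k}(0) ≥ c, then for every k, Σ_{j=0}^{k} ᾱ_j² ≤ (2/c)·[A(f_0) − A(f_{k+1})]. -/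
/-!
Along the segment from `f k` to `f (k + 1)` the objective `ψ ξ = A ((1 - ξ) f k + ξ f (k + 1))` has
second derivative at least `c (α k)²`, while `ψ' 1 = 0` because `f (k + 1)` is an exact line
minimizer. Expanding to second order at `ξ = 1` shows that a single step decreases `A` by at least
`c (α k)² / 2` (`half_le_sub_of_deriv2_ge`), and these decreases telescope.

The curvature hypothesis concerns derivatives at `0` based at a moving point; `d2_shift` identifies
them with derivatives along the fixed line through `f k`.
-/

open Filter Finset Set

variable {V : Type*} [AddCommGroup V] [Module ℝ V]

/-- Second-order expansion at a critical right endpoint, as an inequality: a twice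
differentiable function with `ψ' 1 = 0` and `ψ'' ≥ m` on `(0, 1)` satisfies `ψ 0 - ψ 1 ≥ m / 2`. -/
lemma half_le_sub_of_deriv2_ge {ψ ψ1 ψ2 : ℝ → ℝ} {m : ℝ}
    (h1 : ∀ t, HasDerivAt ψ (ψ1 t) t) (h2 : ∀ t, HasDerivAt ψ1 (ψ2 t) t)
    (hcrit : ψ1 1 = 0) (hm : ∀ t ∈ Set.Ioo (0 : ℝ) 1, m ≤ ψ2 t) :
    m / 2 ≤ ψ 0 - ψ 1 := by
  -- Subtracting the parabola `m / 2 * (1 - t) ^ 2` leaves a convex function critical at `1`,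
  -- hence antitone on `[0, 1]`.
  have hP1 : ∀ t, HasDerivAt (fun t => ψ t - m / 2 * (1 - t) ^ 2) (ψ1 t + m * (1 - t)) t := by
    intro t
    have h := (h1 t).sub ((((hasDerivAt_id t).const_sub 1).pow 2).const_mul (m / 2))
    refine h.congr_deriv ?_
    simp
    ring
  have hP2 : ∀ t, HasDerivAt (fun t => ψ1 t + m * (1 - t)) (ψ2 t - m) t := by
    intro t
    have h := (h2 t).add (((hasDerivAt_id t).const_sub 1).const_mul m)
    refine h.congr_deriv ?_
    ring
  have hmono : MonotoneOn (fun t => ψ1 t + m * (1 - t)) (Set.Icc 0 1) := by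
    refine monotoneOn_of_deriv_nonneg (convex_Icc 0 1)
      (fun t _ => (hP2 t).continuousAt.continuousWithinAt)
      (fun t _ => (hP2 t).differentiableAt.differentiableWithinAt) ?_
    intro t ht
    rw [interior_Icc] at ht
    rw [(hP2 t).deriv]
    linarith [hm t ht]
  have hanti : AntitoneOn (fun t => ψ t - m / 2 * (1 - t) ^ 2) (Set.Icc 0 1) := by
    refine antitoneOn_of_deriv_nonpos (convex_Icc 0 1)
      (fun t _ => (hP1 t).continuousAt.continuousWithinAt)
      (fun t _ => (hP1 t).differentiableAt.differentiableWithinAt) ?_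
    intro t ht
    rw [(hP1 t).deriv]
    have ht' := interior_subset ht
    have h := hmono ht' (Set.right_mem_Icc.2 zero_le_one) ht'.2
    simp only [hcrit] at h
    linarith
  have h := hanti (Set.left_mem_Icc.2 zero_le_one) (Set.right_mem_Icc.2 zero_le_one) zero_le_one
  norm_num at h
  linarith

/-- The second derivative at `0` based at `x + s • y` is the one at `s` based at `x`. -/
lemma d2_shift {S : Set V} {A : V → ℝ} {d1 d2 : V → V → ℝ → ℝ}
    (hd1 : ∀ f ∈ Submodule.span ℝ S, ∀ g ∈ S, ∀ t : ℝ,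
      HasDerivAt (fun u : ℝ => A (f + u • g)) (d1 f g t) t)
    (hd2 : ∀ f ∈ Submodule.span ℝ S, ∀ g ∈ S, ∀ t : ℝ, HasDerivAt (d1 f g) (d2 f g t) t)
    {x y : V} (hx : x ∈ Submodule.span ℝ S) (hy : y ∈ S) (s : ℝ) :
    d2 (x + s • y) y 0 = d2 x y s := by
  have hxs : x + s • y ∈ Submodule.span ℝ S :=
    Submodule.add_mem _ hx (Submodule.smul_mem _ s (Submodule.subset_span hy))
  have hfirst : d1 (x + s • y) y = fun t => d1 x y (s + t) := by
    funext t
    have h := (hd1 x hx y hy (s + t)).comp_const_add s t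
    simp only [add_smul, ← add_assoc] at h
    exact (hd1 _ hxs y hy t).unique h
  have h := hd2 _ hxs y hy 0
  rw [hfirst] at h
  have h' := (hd2 x hx y hy (s + 0)).comp_const_add s 0
  simpa using h.unique h'

/-- Lemma A.1: if each step-size `α k` is an exact line minimizer and
`A''_{(1-ξ) f k + ξ f (k+1), g k}(0) ≥ c > 0` for all `k` and `ξ ∈ (0,1)`, then
`∑_{j=0}^{k} (α j)² ≤ (2/c) (A (f 0) - A (f (k+1)))`. Here `d1 f g` and `d2 f g` are the
first and second derivatives of `h ↦ A (f + h g)`. -/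
theorem exact_line_search_stepsize_bound (S : Set V) (A : V → ℝ)
    (hconv : ConvexOn ℝ (Submodule.span ℝ S : Set V) A)
    (d1 d2 : V → V → ℝ → ℝ)
    (hd1 : ∀ f ∈ Submodule.span ℝ S, ∀ g ∈ S, ∀ t : ℝ,
      HasDerivAt (fun u : ℝ => A (f + u • g)) (d1 f g t) t)
    (hd2 : ∀ f ∈ Submodule.span ℝ S, ∀ g ∈ S, ∀ t : ℝ, HasDerivAt (d1 f g) (d2 f g t) t)
    (f : ℕ → V) (α : ℕ → ℝ) (g : ℕ → V)
    (hf0 : f 0 ∈ Submodule.span ℝ S) (hg : ∀ k, g k ∈ S)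
    (hstep : ∀ k, f (k + 1) = f k + α k • g k)
    (hexact : ∀ k (b : ℝ), A (f (k + 1)) ≤ A (f k + b • g k))
    (c : ℝ) (hc : 0 < c)
    (hlb : ∀ k, ∀ ξ ∈ Set.Ioo (0 : ℝ) 1, c ≤ d2 ((1 - ξ) • f k + ξ • f (k + 1)) (g k) 0)
    (k : ℕ) :
    ∑ j ∈ Finset.range (k + 1), α j ^ 2 ≤ 2 / c * (A (f 0) - A (f (k + 1))) := by
  have hf : ∀ k, f k ∈ Submodule.span ℝ S := by
    intro k
    induction k with
    | zero => exact hf0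
    | succ k ih =>
      rw [hstep]
      exact Submodule.add_mem _ ih (Submodule.smul_mem _ _ (Submodule.subset_span (hg k)))
  have hdecr : ∀ k, c * α k ^ 2 / 2 ≤ A (f k) - A (f (k + 1)) := by
    intro k
    have hmul : ∀ t : ℝ, HasDerivAt (fun t : ℝ => t * α k) (α k) t := fun t => by
      simpa using (hasDerivAt_id t).mul_const (α k)
    have h1 : ∀ t, HasDerivAt (fun t : ℝ => A (f k + (t * α k) • g k))
        (d1 (f k) (g k) (t * α k) * α k) t := fun t =>
      HasDerivAt.comp (h₂ := fun u : ℝ => A (f k + u • g k)) t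
        (hd1 _ (hf k) _ (hg k) (t * α k)) (hmul t)
    have h2 : ∀ t, HasDerivAt (fun t : ℝ => d1 (f k) (g k) (t * α k) * α k)
        (d2 (f k) (g k) (t * α k) * α k * α k) t := fun t =>
      ((hd2 _ (hf k) _ (hg k) (t * α k)).comp t (hmul t)).mul_const (α k)
    have hcrit : d1 (f k) (g k) (α k) = 0 := by
      have hmin : IsLocalMin (fun u : ℝ => A (f k + u • g k)) (α k) :=
        Filter.Eventually.of_forall fun b => by
          have := hexact k b
          rwa [hstep] at this
      exact hmin.hasDerivAt_eq_zero (hd1 _ (hf k) _ (hg k) (α k))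
    have h := half_le_sub_of_deriv2_ge (m := c * α k ^ 2) h1 h2 (by simp [hcrit]) (by
      intro t ht
      have hpt : (1 - t) • f k + t • f (k + 1) = f k + (t * α k) • g k := by
        rw [hstep]
        module
      have hle := hlb k t ht
      rw [hpt, d2_shift hd1 hd2 (hf k) (hg k)] at hle
      nlinarith [mul_le_mul_of_nonneg_right hle (sq_nonneg (α k))])
    simpa [hstep] using h
  calc ∑ j ∈ Finset.range (k + 1), α j ^ 2
      ≤ ∑ j ∈ Finset.range (k + 1), 2 / c * (A (f j) - A (f (j + 1))) := by
        refine Finset.sum_le_sum fun j _ => ?_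
        rw [div_mul_eq_mul_div, le_div_iff₀ hc]
        linarith [hdecr j]
    _ = 2 / c * (A (f 0) - A (f (k + 1))) := by
        rw [← Finset.mul_sum, Finset.sum_range_sub' (fun j => A (f j))]
end

section
/- Assume A satisfies Assumption 3.1 with sup_a M(a) < +∞, and the tolerances satisfy Σ_{j=0}^{∞} ε_j < ∞. Run the greedy boosting algorithm with Λ_k = ℝ and with each ᾱ_k an exact line minimizer: A(f_k + ᾱ_k ḡ_k) = inf_{α ∈ ℝ} A(f_k + α ḡ_k). If inf_k inf_{ξ∈(0,1)} A''_{(1−ξ)f_k + ξ f_{k+1}, ḡ_k}(0) > 0, then lim_{k→∞} A(f_k) = inf_{f ∈ span(S)} A(f). -/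
/-!
The values `A (f k)` decrease, so in `EReal` they tend to `⨅ k, A (f k)`, and it suffices to refute
the existence of `q` in the span and `η > 0` with `A q + η ≤ A (f k)` for all `k`.

Put `δ k = A (f k) - A (f (k + 1)) + ε k`; under that assumption `δ` is summable.

* The uniform upper bound `B` on second derivatives and approximate greediness give
  `|∇A (f k) b| ≤ √(2 B δ k)` for all `b ∈ S` (`grad_sq_le`).
* Exact line minimization and the lower bound `c` on second derivatives give
  `c / 2 * (α k) ^ 2 ≤ δ k` (`quadratic_decrease`). Hence `∑ (α k) ^ 2 < ∞`, and by Cauchy–Schwarz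
  `∑_{j < k} |α j| = O(√k)`.
* Convexity gives `η ≤ A (f k) - A q ≤ ∇A (f k) (f k - q)`, which is at most
  `√(2 B δ k) * (C + ∑_{j < k} |α j|)`, where `C` bounds the 1-norm of `f 0 - q`.

Squaring, `1 / (k + 1) ≤ K * δ k` for a constant `K`, which contradicts the divergence of the
harmonic series (`not_summable_of_sq_le`).
-/

open Filter Finset Set

variable {V : Type*} [AddCommGroup V] [Module ℝ V]

/-- Second-order Taylor bound on `[0, 1]` from an upper bound on the second derivative. -/
lemma taylor_upper {p p1 p2 : ℝ → ℝ} {B : ℝ}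
    (h1 : ∀ t, HasDerivAt p (p1 t) t) (h2 : ∀ t, HasDerivAt p1 (p2 t) t)
    (hB : ∀ t ∈ Set.Ioo (0 : ℝ) 1, p2 t ≤ B) : p 1 ≤ p 0 + p1 0 + B / 2 := by
  have hd1 : ∀ t, HasDerivAt (fun t => p1 t - B * t) (p2 t - B) t := fun t => by
    have := (h2 t).sub ((hasDerivAt_id t).const_mul B)
    exact this.congr_deriv (by simp)
  have key1 : AntitoneOn (fun t => p1 t - B * t) (Set.Icc 0 1) := by
    apply antitoneOn_of_deriv_nonpos (convex_Icc 0 1)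
    · exact fun t _ => (hd1 t).continuousAt.continuousWithinAt
    · exact fun t _ => (hd1 t).differentiableAt.differentiableWithinAt
    · intro t ht
      rw [interior_Icc] at ht
      rw [(hd1 t).deriv]
      linarith [hB t ht]
  have hd0 : ∀ t, HasDerivAt (fun t => p t - p1 0 * t - B / 2 * t ^ 2)
      (p1 t - p1 0 - B * t) t := fun t => by
    have := ((h1 t).sub ((hasDerivAt_id t).const_mul (p1 0))).sub
      ((hasDerivAt_pow 2 t).const_mul (B / 2))
    refine this.congr_deriv ?_
    simp
    ring
  have key0 : AntitoneOn (fun t => p t - p1 0 * t - B / 2 * t ^ 2) (Set.Icc 0 1) := by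
    apply antitoneOn_of_deriv_nonpos (convex_Icc 0 1)
    · exact fun t _ => (hd0 t).continuousAt.continuousWithinAt
    · exact fun t _ => (hd0 t).differentiableAt.differentiableWithinAt
    · intro t ht
      rw [interior_Icc] at ht
      rw [(hd0 t).deriv]
      have := key1 (by simp) (Set.Ioo_subset_Icc_self ht) ht.1.le
      simp at this
      linarith
  have := key0 (a := 0) (b := 1) (by simp) (by simp) zero_le_one
  simp at this
  linarith

/-- If `B` bounds `p''` and no value of `p` is below `p 0 - δ`, then `p'(0)² ≤ 2 B δ`: the
quadratic upper bound for `p` is tested at its minimizer `-p'(0) / B`. -/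
lemma grad_sq_le {p p1 p2 : ℝ → ℝ} {B δ : ℝ} (hBpos : 0 < B)
    (h1 : ∀ t, HasDerivAt p (p1 t) t) (h2 : ∀ t, HasDerivAt p1 (p2 t) t)
    (hB : ∀ t, p2 t ≤ B) (hδ : ∀ a, p 0 - δ ≤ p a) : p1 0 ^ 2 ≤ 2 * B * δ := by
  set a : ℝ := -p1 0 / B with ha
  have hlin : ∀ s : ℝ, HasDerivAt (fun s => a * s) a s := fun s => by
    simpa using (hasDerivAt_id s).const_mul a
  have hT := taylor_upper (p := fun s => p (a * s)) (p1 := fun s => p1 (a * s) * a)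
    (p2 := fun s => p2 (a * s) * a * a) (B := B * a * a)
    (fun s => (h1 (a * s)).comp s (hlin s))
    (fun s => ((h2 (a * s)).comp s (hlin s)).mul_const a)
    (fun s _ => by nlinarith [hB (a * s), mul_self_nonneg a])
  simp only [mul_one, mul_zero] at hT
  have h3 := hδ a
  have haB : B * a = -p1 0 := by rw [ha]; field_simp
  have h4 : p1 0 * a + B * a * a / 2 = -(p1 0 ^ 2) / (2 * B) := by
    rw [haB, ha]; field_simp; ring
  have h5 : p1 0 ^ 2 / (2 * B) ≤ δ := by
    rw [neg_div] at h4
    linarith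
  rw [div_le_iff₀ (by positivity)] at h5
  linarith

/-- Exact minimization at `a` of a function that is `c`-strongly convex between `0` and `a`
decreases its value by at least `c a² / 2`. -/
lemma quadratic_decrease {p p1 p2 : ℝ → ℝ} {c a : ℝ}
    (h1 : ∀ t, HasDerivAt p (p1 t) t) (h2 : ∀ t, HasDerivAt p1 (p2 t) t)
    (hmin : ∀ b, p a ≤ p b) (hc : ∀ s ∈ Set.Ioo (0 : ℝ) 1, c ≤ p2 (s * a)) :
    p a + c / 2 * a ^ 2 ≤ p 0 := by
  have h0 : p1 a = 0 :=
    IsLocalMin.hasDerivAt_eq_zero (Filter.Eventually.of_forall hmin) (h1 a)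
  have hlin : ∀ s : ℝ, HasDerivAt (fun s => (1 - s) * a) (-a) s := fun s => by
    simpa using ((hasDerivAt_id s).const_sub 1).mul_const a
  have hT := taylor_upper (p := fun s => -p ((1 - s) * a))
    (p1 := fun s => -(p1 ((1 - s) * a) * -a))
    (p2 := fun s => -(p2 ((1 - s) * a) * -a * -a)) (B := -(c * a ^ 2))
    (fun s => ((h1 _).comp s (hlin s)).neg)
    (fun s => (((h2 _).comp s (hlin s)).mul_const (-a)).neg)
    (fun s hs => by
      have := hc (1 - s) ⟨by linarith [hs.2], by linarith [hs.1]⟩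
      nlinarith [sq_nonneg a])
  simp [h0] at hT
  linarith

/-- Every `h ∈ span S` has a finite 1-norm: some `C` bounds the action on `h` of all
linear functionals bounded on `S`. -/
lemma exists_functional_bound (S : Set V) {h : V} (hh : h ∈ Submodule.span ℝ S) :
    ∃ C : ℝ, 0 ≤ C ∧ ∀ (G : V →ₗ[ℝ] ℝ) (t : ℝ), (∀ b ∈ S, |G b| ≤ t) → |G h| ≤ C * t := by
  induction hh using Submodule.span_induction with
  | mem x hx => exact ⟨1, zero_le_one, fun G t hG => by simpa using hG x hx⟩
  | zero => exact ⟨0, le_rfl, fun G t hG => by simp⟩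
  | add x y _ _ hx hy =>
    obtain ⟨C, hC, h1⟩ := hx
    obtain ⟨D, hD, h2⟩ := hy
    refine ⟨C + D, by positivity, fun G t hG => ?_⟩
    rw [map_add]
    linarith [abs_add_le (G x) (G y), h1 G t hG, h2 G t hG]
  | smul r x _ hx =>
    obtain ⟨C, hC, h1⟩ := hx
    refine ⟨|r| * C, by positivity, fun G t hG => ?_⟩
    rw [map_smul, smul_eq_mul, abs_mul, mul_assoc]
    exact mul_le_mul_of_nonneg_left (h1 G t hG) (abs_nonneg r)

/-- First-order condition for convexity, with only directional derivatives available. -/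
lemma gradient_inequality {W : Submodule ℝ V} {A : V → ℝ} (hconv : ConvexOn ℝ (W : Set V) A)
    {x q : V} (hx : x ∈ W) (hq : q ∈ W) {m : ℝ}
    (hm : Tendsto (fun h : ℝ => (A (x + h • (q - x)) - A x) / h)
      (nhdsWithin (0 : ℝ) {(0 : ℝ)}ᶜ) (nhds m)) : m ≤ A q - A x := by
  have hm' := hm.mono_left (nhdsWithin_mono (0 : ℝ) (s := Set.Ioi 0)
    (fun y (hy : 0 < y) => hy.ne'))
  refine le_of_tendsto hm' ?_
  filter_upwards [Ioo_mem_nhdsGT (zero_lt_one' ℝ)] with h hh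
  rw [div_le_iff₀ hh.1]
  have h1 := hconv.2 hx hq (show (0 : ℝ) ≤ 1 - h by linarith [hh.2]) hh.1.le (by ring)
  have h2 : (1 - h) • x + h • q = x + h • (q - x) := by module
  rw [h2, smul_eq_mul, smul_eq_mul] at h1
  linarith

/-- If `δ` and `a²` are summable, `√(δ k) * (C + ∑_{j < k} |a j|)` cannot stay away from `0`. -/
lemma not_summable_of_sq_le {δ a : ℕ → ℝ} {C η D : ℝ} (hη : 0 < η)
    (hδ0 : ∀ k, 0 ≤ δ k) (hD : ∀ k, ∑ j ∈ Finset.range k, a j ^ 2 ≤ D)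
    (h : ∀ k, η ^ 2 ≤ δ k * (C + ∑ j ∈ Finset.range k, |a j|) ^ 2) : ¬ Summable δ := by
  intro hs
  have hD0 : 0 ≤ D := by simpa using hD 0
  set K : ℝ := 2 * C ^ 2 + 2 * D with hK
  have hK0 : 0 ≤ K := by positivity
  have hb : ∀ k : ℕ, (1 : ℝ) / ((k : ℝ) + 1) ≤ K / η ^ 2 * δ k := by
    intro k
    have hk0 : (0 : ℝ) ≤ k := Nat.cast_nonneg k
    have hcs := sq_sum_le_card_mul_sum_sq (s := Finset.range k) (f := fun j => |a j|)
    simp only [sq_abs, Finset.card_range] at hcs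
    have h1 : (∑ j ∈ Finset.range k, |a j|) ^ 2 ≤ k * D :=
      hcs.trans (mul_le_mul_of_nonneg_left (hD k) hk0)
    have h2 : (C + ∑ j ∈ Finset.range k, |a j|) ^ 2 ≤ K * (k + 1) := by
      have h3 := add_sq_le (a := C) (b := ∑ j ∈ Finset.range k, |a j|)
      have h4 : 0 ≤ C ^ 2 * k := by positivity
      rw [hK]
      nlinarith
    have h5 := (h k).trans (mul_le_mul_of_nonneg_left h2 (hδ0 k))
    rw [div_mul_eq_mul_div, div_le_div_iff₀ (by positivity) (by positivity)]
    nlinarith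
  have hsum : Summable (fun k : ℕ => (1 : ℝ) / ((k : ℝ) + 1)) :=
    Summable.of_nonneg_of_le (fun k => by positivity) hb (hs.mul_left _)
  have := (summable_nat_add_iff (f := fun n : ℕ => (1 : ℝ) / (n : ℝ)) 1).1 (by simpa using hsum)
  exact Real.not_summable_one_div_natCast this

/-- Moving the base point along the line translates the second derivative. -/
lemma second_deriv_shift {p p1 p2 r r1 : ℝ → ℝ} {s r2 : ℝ}
    (h1 : ∀ t, HasDerivAt p (p1 t) t) (h2 : HasDerivAt p1 (p2 s) s)
    (hr : ∀ u, r u = p (s + u)) (hr1 : ∀ u, HasDerivAt r (r1 u) u)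
    (hr2 : HasDerivAt r1 r2 0) : r2 = p2 s := by
  have e1 : r1 = fun u => p1 (s + u) := by
    funext u
    have : HasDerivAt r (p1 (s + u)) u := by
      rw [funext hr]
      exact (h1 (s + u)).comp_const_add s u
    exact (hr1 u).unique this
  subst e1
  refine hr2.unique (HasDerivAt.comp_const_add s 0 ?_)
  simpa using h2

/-- Corollary A.1: under Assumption 3.1 with `sup_a M a < ∞` and `∑ ε j < ∞`, if the greedy
boosting algorithm is run with `Λ k = ℝ`, each step-size `α k` is an exact line minimizer,
and `inf_k inf_{ξ ∈ (0,1)} A''_{(1-ξ) f k + ξ f (k+1), g k}(0) > 0`, then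
`A (f k) → inf_{f ∈ span S} A f`. Here `d1 f g` and `d2 f g` are the first and second
derivatives of `h ↦ A (f + h g)`. -/
theorem unrestricted_exact_convergence (S : Set V) (A : V → ℝ) (M : ℝ → ℝ)
    (hA : Assumption31 S A M)
    (hM : ∃ B : ℝ, ∀ a : ℝ, M a ≤ B)
    (d1 d2 : V → V → ℝ → ℝ)
    (hd1 : ∀ f ∈ Submodule.span ℝ S, ∀ g ∈ S, ∀ t : ℝ,
      HasDerivAt (fun u : ℝ => A (f + u • g)) (d1 f g t) t)
    (hd2 : ∀ f ∈ Submodule.span ℝ S, ∀ g ∈ S, ∀ t : ℝ, HasDerivAt (d1 f g) (d2 f g t) t)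
    (f : ℕ → V) (α : ℕ → ℝ) (g : ℕ → V) (ε : ℕ → ℝ)
    (hboost : GreedyBoosting S A f α g (fun _ => Set.univ) ε)
    (hε : Summable ε)
    (hexact : ∀ k (b : ℝ), A (f (k + 1)) ≤ A (f k + b • g k))
    (hlb : ∃ c : ℝ, 0 < c ∧
      ∀ k, ∀ ξ ∈ Set.Ioo (0 : ℝ) 1, c ≤ d2 ((1 - ξ) • f k + ξ • f (k + 1)) (g k) 0) :
    Tendsto (fun k => (A (f k) : EReal)) atTop
      (nhds (⨅ q ∈ (Submodule.span ℝ S : Set V), (A q : EReal))) := by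
  obtain ⟨B₀, hB₀⟩ := hM
  obtain ⟨c, hc, hlb⟩ := hlb
  obtain ⟨G, hG⟩ := hA.differentiable
  set B : ℝ := max B₀ 1 with hBdef
  have hBpos : 0 < B := lt_of_lt_of_le one_pos (le_max_right _ _)
  have hSmem : ∀ b ∈ S, b ∈ Submodule.span ℝ S := fun b hb => Submodule.subset_span hb
  have hfmem : ∀ k, f k ∈ Submodule.span ℝ S := by
    intro k
    induction k with
    | zero => exact hboost.init_mem
    | succ k ih =>
      rw [hboost.step]
      exact add_mem ih (Submodule.smul_mem _ _ (hSmem _ (hboost.g_mem k)))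
  have hGd1 : ∀ x ∈ Submodule.span ℝ S, ∀ b ∈ S, d1 x b 0 = G x b := by
    intro x hx b hb
    have h1 := (hasDerivAt_iff_tendsto_slope_zero.1 (hd1 x hx b hb 0))
    refine tendsto_nhds_unique h1 ((hG x hx b (hSmem b hb)).congr fun h => ?_)
    simp [div_eq_inv_mul]
  have hd2B : ∀ x ∈ Submodule.span ℝ S, ∀ b ∈ S, ∀ t, d2 x b t ≤ B := by
    intro x hx b hb t
    obtain ⟨e1, e2, he1, he2, hle⟩ := hA.secondDeriv (x + t • b)
      (add_mem hx (Submodule.smul_mem _ _ (hSmem b hb))) b hb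
    have := second_deriv_shift (s := t) (hd1 x hx b hb) (hd2 x hx b hb t)
      (fun u => by rw [add_smul, ← add_assoc]) he1 (he2 0)
    rw [← this]
    exact hle.trans ((hB₀ _).trans (le_max_left _ _))
  have hd2c : ∀ k, ∀ s ∈ Set.Ioo (0 : ℝ) 1, c ≤ d2 (f k) (g k) (s * α k) := by
    intro k s hs
    have hpt : (1 - s) • f k + s • f (k + 1) = f k + (s * α k) • g k := by
      rw [hboost.step]; module
    have hmem : f k + (s * α k) • g k ∈ Submodule.span ℝ S :=
      add_mem (hfmem k) (Submodule.smul_mem _ _ (hSmem _ (hboost.g_mem k)))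
    have h := hlb k s hs
    rw [hpt] at h
    have := second_deriv_shift (s := s * α k) (hd1 _ (hfmem k) _ (hboost.g_mem k))
      (hd2 _ (hfmem k) _ (hboost.g_mem k) _)
      (fun u => by rw [add_smul, ← add_assoc]) (hd1 _ hmem _ (hboost.g_mem k))
      (hd2 _ hmem _ (hboost.g_mem k) 0)
    rwa [← this]
  have hdec : ∀ k, A (f (k + 1)) + c / 2 * α k ^ 2 ≤ A (f k) := by
    intro k
    have := quadratic_decrease (a := α k) (hd1 _ (hfmem k) _ (hboost.g_mem k))
      (hd2 _ (hfmem k) _ (hboost.g_mem k))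
      (fun b => by simpa only [hboost.step] using hexact k b) (hd2c k)
    simpa [hboost.step] using this
  have hanti : Antitone fun k => A (f k) :=
    antitone_nat_of_succ_le fun k => by
      have : 0 ≤ c / 2 * α k ^ 2 := by positivity
      linarith [hdec k]
  have hantiE : Antitone fun k => (A (f k) : EReal) :=
    fun i j hij => EReal.coe_le_coe_iff.2 (hanti hij)
  have hlim := tendsto_atTop_iInf hantiE
  suffices heq : (⨅ q ∈ (Submodule.span ℝ S : Set V), (A q : EReal)) = ⨅ k, (A (f k) : EReal) by
    rwa [heq]
  refine le_antisymm (le_iInf fun k => iInf₂_le (f k) (hfmem k)) (le_iInf₂ fun q hq => ?_)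
  by_contra hlt
  obtain ⟨x, hqx, hx⟩ := EReal.lt_iff_exists_real_btwn.1 (not_le.1 hlt)
  have hqx : A q < x := EReal.coe_lt_coe_iff.1 hqx
  have hxk : ∀ k, x ≤ A (f k) := fun k =>
    EReal.coe_le_coe_iff.1 (hx.le.trans (iInf_le _ k))
  set δ : ℕ → ℝ := fun k => A (f k) - A (f (k + 1)) + ε k with hδ
  have hδ0 : ∀ k, 0 ≤ δ k := fun k => by
    have := hanti (Nat.le_succ k)
    have := hboost.eps_nonneg k
    simp only [hδ]
    simp only [Nat.succ_eq_add_one] at *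
    linarith
  have hδsum : Summable δ := by
    refine Summable.add (summable_of_sum_range_le (c := A (f 0) - x) (fun k => ?_)
      fun n => ?_) hε
    · exact sub_nonneg.2 (hanti (Nat.le_succ k))
    · rw [Finset.sum_range_sub' (fun k => A (f k))]
      linarith [hxk n]
  have hαsum : ∀ k, ∑ j ∈ Finset.range k, α j ^ 2 ≤ 2 / c * (A (f 0) - x) := by
    intro k
    have h1 : ∑ j ∈ Finset.range k, α j ^ 2 ≤
        ∑ j ∈ Finset.range k, 2 / c * (A (f j) - A (f (j + 1))) := by
      refine Finset.sum_le_sum fun j _ => ?_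
      rw [div_mul_eq_mul_div, le_div_iff₀ hc]
      linarith [hdec j]
    rw [← Finset.mul_sum, Finset.sum_range_sub' (fun k => A (f k))] at h1
    exact h1.trans (mul_le_mul_of_nonneg_left (by linarith [hxk k]) (by positivity))
  have hgrad : ∀ k, ∀ b ∈ S, |G (f k) b| ≤ √(2 * B * δ k) := by
    intro k b hb
    apply Real.abs_le_sqrt
    rw [← hGd1 _ (hfmem k) b hb]
    refine grad_sq_le hBpos (hd1 _ (hfmem k) b hb) (hd2 _ (hfmem k) b hb)
      (hd2B _ (hfmem k) b hb) fun a => ?_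
    have := hboost.approx_min k a (Set.mem_univ a) b hb
    simp only [hδ, zero_smul, add_zero]
    linarith
  obtain ⟨C, hC, hCG⟩ := exists_functional_bound S (sub_mem (hfmem 0) hq)
  have hnorm : ∀ k, ∀ (L : V →ₗ[ℝ] ℝ) (t : ℝ), (∀ b ∈ S, |L b| ≤ t) →
      |L (f k - q)| ≤ (C + ∑ j ∈ Finset.range k, |α j|) * t := by
    intro k L t hL
    induction k with
    | zero => simpa using hCG L t hL
    | succ k ih =>
      have e : f (k + 1) - q = (f k - q) + α k • g k := by rw [hboost.step]; abel
      rw [e, map_add, map_smul, smul_eq_mul, Finset.sum_range_succ]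
      have h1 := abs_add_le (L (f k - q)) (α k * L (g k))
      rw [abs_mul] at h1
      have h2 := mul_le_mul_of_nonneg_left (hL _ (hboost.g_mem k)) (abs_nonneg (α k))
      linarith
  refine not_summable_of_sq_le (η := x - A q) (δ := fun k => 2 * B * δ k) (a := α) (C := C)
    (sub_pos.2 hqx) (fun k => mul_nonneg (by positivity) (hδ0 k)) hαsum (fun k => ?_)
    (hδsum.mul_left _)
  have h1 := gradient_inequality hA.convexOn (hfmem k) hq
    (hG _ (hfmem k) _ (sub_mem hq (hfmem k)))
  have h2 := hnorm k (G (f k)) _ (hgrad k)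
  have h3 : G (f k) (q - f k) = -G (f k) (f k - q) := by rw [← map_neg, neg_sub]
  have h4 : x - A q ≤ (C + ∑ j ∈ Finset.range k, |α j|) * √(2 * B * δ k) := by
    linarith [le_abs_self (G (f k) (f k - q)), hxk k]
  have h5 := pow_le_pow_left₀ (sub_pos.2 hqx).le h4 2
  rw [mul_pow, Real.sq_sqrt (mul_nonneg (by positivity) (hδ0 k))] at h5
  linarith
end

section
/- (Exponential loss with exact line search.) Let A(f) = ln E_{X,Y} exp(−f(X)Y) with y = ±1 and sup_{g∈S,x}|g(x)| ≤ 1. Assume inf_{g∈S} E_X [ |g(X)|·√(P(Y=1|X)·P(Y=−1|X)) ] > 0 and that each step-size ᾱ_k of the greedy boosting algorithm exactly minimizes α ↦ A(f_k + α ḡ_k) over ℝ. Then inf_k inf_{ξ∈(0,1)} A''_{(1−ξ)f_k + ξ f_{k+1}, ḡ_k}(0) ≥ exp(−2A(f_0))·( E_X [ |ḡ_k(X)|·√(2 P(Y=1|X) P(Y=−1|X)) ] )² > 0; consequently Σ_{j} ᾱ_j² < ∞. -/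
/-!
Write `a = η e^{-F}`, `b = (1 - η) e^F`, so that `W = ∫ (a + b)` is the exponential risk and
`A = log W`. Along a line `u ↦ F + u g` differentiation under the integral sign (legitimate since
`|g| ≤ 1`) gives `W' = ∫ g (b - a)` and `W'' = ∫ g² (a + b)`, so
`A'' = W''/W - (W'/W)²` is the variance of `Y g(X)` under the tilted law of `(X, Y)`.

Lower bound on the variance (`four_mul_sq_le_risk_mul_sub`): with `s = √(η (1 - η)) = √(a b)`,
for all real `m`, `t`, completing squares yields pointwise
`4 t s |g| ≤ a (g + m)² + b (g - m)² + t² (a + b)`.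
Integrating, with `m = W'/W` and `t = 2 I / W`, where `I = ∫ s |g|`, gives `4 I² ≤ W W'' - W'²`,
i.e. `A'' ≥ 4 I² exp (-2 A)`; this is twice what is claimed.

`W` is convex, and the exact line search makes `A (f k)` nonincreasing, so `A ≤ A (f 0)` on the
segment from `f k` to `f (k + 1)`. A second order expansion around the minimizer `f (k + 1)` then
gives `A (f k) - A (f (k + 1)) ≥ const * (α k)²`. Since `a + b ≥ 2 s`, `A` is bounded below, and
telescoping yields summability.
-/

open Filter Finset Set MeasureTheory

/-- The weighted integral `∫ ψ ((1 - η) e^F + ε η e^{-F}) dμ`. For `ψ = 1`, `ε = 1` it is the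
exponential risk `E exp (-F(X) Y)`; its derivatives along lines are again of this form, with the
sign `ε` alternating. -/
noncomputable def tiltedMoment {X : Type*} [MeasurableSpace X] (μ : Measure X) (η : X → ℝ)
    (ψ : X → ℝ) (ε : ℝ) (F : X → ℝ) : ℝ :=
  ∫ x, ψ x * ((1 - η x) * Real.exp (F x) + ε * (η x * Real.exp (-F x))) ∂μ

lemma abs_weight_le {η ψ ε y : ℝ} (hη : 0 ≤ η ∧ η ≤ 1) (hψ : |ψ| ≤ 1) (hε : |ε| ≤ 1) :
    |ψ * ((1 - η) * Real.exp y + ε * (η * Real.exp (-y)))|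
      ≤ η * Real.exp (-y) + (1 - η) * Real.exp y := by
  have ha : 0 ≤ η * Real.exp (-y) := mul_nonneg hη.1 (Real.exp_pos _).le
  have hb : 0 ≤ (1 - η) * Real.exp y := mul_nonneg (by linarith [hη.2]) (Real.exp_pos _).le
  set a := η * Real.exp (-y)
  set b := (1 - η) * Real.exp y
  have h1 : |b + ε * a| ≤ a + b := by
    rw [abs_le] at hε ⊢
    constructor <;> nlinarith
  rw [abs_mul]
  nlinarith [abs_nonneg ψ, abs_nonneg (b + ε * a)]

section Moments

variable {X : Type*} [MeasurableSpace X] {μ : Measure X} {η : X → ℝ}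

lemma integrable_tilted (hηmeas : Measurable η) (hη : ∀ x, 0 ≤ η x ∧ η x ≤ 1)
    {F : X → ℝ} (hF : Measurable F)
    (hFi : Integrable (fun x => η x * Real.exp (-F x) + (1 - η x) * Real.exp (F x)) μ)
    {ψ : X → ℝ} (hψ : Measurable ψ) (hψ1 : ∀ x, |ψ x| ≤ 1) {ε : ℝ} (hε : |ε| ≤ 1) :
    Integrable (fun x => ψ x * ((1 - η x) * Real.exp (F x) + ε * (η x * Real.exp (-F x)))) μ := by
  refine hFi.mono' (by fun_prop) (Eventually.of_forall fun x => ?_)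
  rw [Real.norm_eq_abs]
  exact abs_weight_le (hη x) (hψ1 x) hε

lemma hasDerivAt_tiltedMoment (hηmeas : Measurable η) (hη : ∀ x, 0 ≤ η x ∧ η x ≤ 1)
    {F : X → ℝ} (hF : Measurable F)
    (hFi : Integrable (fun x => η x * Real.exp (-F x) + (1 - η x) * Real.exp (F x)) μ)
    {g : X → ℝ} (hg : Measurable g) (hg1 : ∀ x, |g x| ≤ 1)
    (hline : ∀ u : ℝ, Integrable (fun x => η x * Real.exp (-(F + u • g) x)
      + (1 - η x) * Real.exp ((F + u • g) x)) μ)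
    {ψ : X → ℝ} (hψ : Measurable ψ) (hψ1 : ∀ x, |ψ x| ≤ 1) {ε : ℝ} (hε : |ε| ≤ 1) (t : ℝ) :
    HasDerivAt (fun u : ℝ => tiltedMoment μ η ψ ε (F + u • g))
      (tiltedMoment μ η (fun x => ψ x * g x) (-ε) (F + t • g)) t := by
  have hψg : ∀ x, |ψ x * g x| ≤ 1 := fun x => by
    rw [abs_mul]
    nlinarith [hψ1 x, hg1 x, abs_nonneg (ψ x), abs_nonneg (g x)]
  unfold tiltedMoment
  refine (hasDerivAt_integral_of_dominated_loc_of_deriv_le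
    (F' := fun u x => ψ x * g x * ((1 - η x) * Real.exp ((F + u • g) x)
      + -ε * (η x * Real.exp (-(F + u • g) x))))
    (bound := fun x => Real.exp (|t| + 1) *
      (η x * Real.exp (-F x) + (1 - η x) * Real.exp (F x)))
    (Metric.ball_mem_nhds t one_pos) ?_ ?_ ?_ ?_ ?_ ?_).2
  · refine Eventually.of_forall fun u => ?_
    simp only [Pi.add_apply, Pi.smul_apply, smul_eq_mul]
    fun_prop
  · exact integrable_tilted hηmeas hη (by fun_prop) (hline t) hψ hψ1 hε
  · simp only [Pi.add_apply, Pi.smul_apply, smul_eq_mul]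
    fun_prop
  · refine Eventually.of_forall fun x u hu => ?_
    rw [Real.norm_eq_abs]
    refine (abs_weight_le (hη x) (hψg x) (by rwa [abs_neg])).trans ?_
    have hu' : |u| ≤ |t| + 1 := by
      have h1 : |u - t| < 1 := by simpa [Real.dist_eq] using hu
      have h2 : |u| ≤ |u - t| + |t| := by simpa using abs_add_le (u - t) t
      linarith
    have hug : |u * g x| ≤ |t| + 1 := by
      rw [abs_mul]
      nlinarith [hg1 x, abs_nonneg u, abs_nonneg (g x)]
    obtain ⟨h1, h2⟩ := abs_le.1 hug
    have e1 : Real.exp (-(F + u • g) x) ≤ Real.exp (|t| + 1) * Real.exp (-F x) := by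
      rw [← Real.exp_add]
      apply Real.exp_le_exp.2
      simp only [Pi.add_apply, Pi.smul_apply, smul_eq_mul]
      linarith
    have e2 : Real.exp ((F + u • g) x) ≤ Real.exp (|t| + 1) * Real.exp (F x) := by
      rw [← Real.exp_add]
      apply Real.exp_le_exp.2
      simp only [Pi.add_apply, Pi.smul_apply, smul_eq_mul]
      linarith
    nlinarith [mul_le_mul_of_nonneg_left e1 (hη x).1,
      mul_le_mul_of_nonneg_left e2 (sub_nonneg.2 (hη x).2)]
  · exact hFi.const_mul _
  · refine Eventually.of_forall fun x u _ => ?_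
    have hl : HasDerivAt (fun u : ℝ => (F + u • g) x) (g x) u := by
      simpa using ((hasDerivAt_id u).mul_const (g x)).const_add (F x)
    have := (((hl.exp.const_mul (1 - η x))).add
      ((hl.neg.exp.const_mul (η x)).const_mul ε)).const_mul (ψ x)
    refine this.congr_deriv ?_
    simp only [Pi.neg_apply]
    ring

lemma risk_integral_pos [IsProbabilityMeasure μ] (hη : ∀ x, 0 ≤ η x ∧ η x ≤ 1) {F : X → ℝ}
    (hFi : Integrable (fun x => η x * Real.exp (-F x) + (1 - η x) * Real.exp (F x)) μ) :
    0 < ∫ x, (η x * Real.exp (-F x) + (1 - η x) * Real.exp (F x)) ∂μ := by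
  have hpos : ∀ x, 0 < η x * Real.exp (-F x) + (1 - η x) * Real.exp (F x) := fun x => by
    rcases (hη x).1.eq_or_lt with h | h
    · rw [← h]
      simpa using Real.exp_pos (F x)
    · have h2 : 0 ≤ (1 - η x) * Real.exp (F x) :=
        mul_nonneg (by linarith [(hη x).2]) (Real.exp_pos _).le
      have h3 := mul_pos h (Real.exp_pos (-F x))
      linarith
  rw [integral_pos_iff_support_of_nonneg (fun x => (hpos x).le) hFi]
  have : Function.support
      (fun x => η x * Real.exp (-F x) + (1 - η x) * Real.exp (F x)) = Set.univ :=
    Set.eq_univ_of_forall fun x => (hpos x).ne'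
  rw [this]
  simp

lemma sqrt_mul_exp_eq {p y : ℝ} (hp : 0 ≤ p ∧ p ≤ 1) :
    Real.sqrt (p * Real.exp (-y)) * Real.sqrt ((1 - p) * Real.exp y)
      = Real.sqrt (p * (1 - p)) := by
  rw [← Real.sqrt_mul (mul_nonneg hp.1 (Real.exp_pos _).le)]
  congr 1
  have : Real.exp (-y) * Real.exp y = 1 := by rw [← Real.exp_add]; simp
  linear_combination p * (1 - p) * this

/-- Completing squares: with `P² = p e^{-y}`, `Q² = (1 - p) e^y` and `v = |g|`, the difference of
the two sides is `(P (v + n) - t Q)² + (Q (v - n) - t P)²`, where `n = m` if `g ≥ 0` and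
`n = -m` otherwise. -/
lemma pointwise_variance_bound {p y g : ℝ} (hp : 0 ≤ p ∧ p ≤ 1) (m t : ℝ) :
    4 * t * (|g| * Real.sqrt (p * (1 - p)))
      ≤ g * g * ((1 - p) * Real.exp y + p * Real.exp (-y))
        - 2 * m * (g * ((1 - p) * Real.exp y - p * Real.exp (-y)))
        + (m ^ 2 + t ^ 2) * ((1 - p) * Real.exp y + p * Real.exp (-y)) := by
  rw [← sqrt_mul_exp_eq (y := y) hp]
  have ha := Real.sq_sqrt (mul_nonneg hp.1 (Real.exp_pos (-y)).le)
  have hb := Real.sq_sqrt (mul_nonneg (sub_nonneg.2 hp.2) (Real.exp_pos y).le)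
  set P := Real.sqrt (p * Real.exp (-y))
  set Q := Real.sqrt ((1 - p) * Real.exp y)
  rw [← ha, ← hb]
  rcases abs_choice g with h | h <;> rw [h]
  · nlinarith [sq_nonneg (P * (g + m) - t * Q), sq_nonneg (Q * (g - m) - t * P)]
  · nlinarith [sq_nonneg (P * (-g - m) - t * Q), sq_nonneg (Q * (-g + m) - t * P)]

lemma integrable_abs_mul_sqrt [IsProbabilityMeasure μ] (hηmeas : Measurable η)
    (hη : ∀ x, 0 ≤ η x ∧ η x ≤ 1) {g : X → ℝ} (hg : Measurable g) (hg1 : ∀ x, |g x| ≤ 1) :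
    Integrable (fun x => |g x| * Real.sqrt (η x * (1 - η x))) μ := by
  refine (integrable_const (1 : ℝ)).mono' ?_ (Eventually.of_forall fun x => ?_)
  · have : Measurable (fun x => |g x|) := by simpa [Real.norm_eq_abs] using hg.norm
    exact (this.mul (by fun_prop : Measurable fun x => η x * (1 - η x)).sqrt).aestronglyMeasurable
  · have h1 : Real.sqrt (η x * (1 - η x)) ≤ 1 :=
      Real.sqrt_le_one.2 (by nlinarith [(hη x).1, (hη x).2])
    have h0 := Real.sqrt_nonneg (η x * (1 - η x))
    rw [Real.norm_eq_abs, abs_mul, abs_abs, abs_of_nonneg h0]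
    nlinarith [hg1 x, abs_nonneg (g x)]

/-- The variance bound `4 I² ≤ W W'' - W'²`. -/
lemma four_mul_sq_le_risk_mul_sub [IsProbabilityMeasure μ] (hηmeas : Measurable η)
    (hη : ∀ x, 0 ≤ η x ∧ η x ≤ 1) {F : X → ℝ} (hF : Measurable F)
    (hFi : Integrable (fun x => η x * Real.exp (-F x) + (1 - η x) * Real.exp (F x)) μ)
    {g : X → ℝ} (hg : Measurable g) (hg1 : ∀ x, |g x| ≤ 1)
    (hW : 0 < tiltedMoment μ η (fun _ => 1) 1 F) :
    4 * (∫ x, |g x| * Real.sqrt (η x * (1 - η x)) ∂μ) ^ 2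
      ≤ tiltedMoment μ η (fun _ => 1) 1 F * tiltedMoment μ η (fun x => g x * g x) 1 F
        - tiltedMoment μ η g (-1) F ^ 2 := by
  set I := ∫ x, |g x| * Real.sqrt (η x * (1 - η x)) ∂μ with hI
  have hgg : ∀ x, |g x * g x| ≤ 1 := fun x => by
    rw [abs_mul]
    nlinarith [hg1 x, abs_nonneg (g x)]
  have i0 := integrable_tilted (ψ := fun _ => 1) (ε := 1) hηmeas hη hF hFi (by fun_prop)
    (by simp) (by simp)
  have i1 := integrable_tilted (ψ := g) (ε := -1) hηmeas hη hF hFi hg hg1 (by simp)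
  have i2 := integrable_tilted (ψ := fun x => g x * g x) (ε := 1) hηmeas hη hF hFi (by fun_prop)
    hgg (by simp)
  have key : ∀ m t : ℝ, 4 * t * I ≤ tiltedMoment μ η (fun x => g x * g x) 1 F
      - 2 * m * tiltedMoment μ η g (-1) F
      + (m ^ 2 + t ^ 2) * tiltedMoment μ η (fun _ => 1) 1 F := by
    intro m t
    have h := integral_mono ((integrable_abs_mul_sqrt hηmeas hη hg hg1).const_mul (4 * t))
      ((i2.sub (i1.const_mul (2 * m))).add (i0.const_mul (m ^ 2 + t ^ 2))) fun x => by
        have := pointwise_variance_bound (y := F x) (g := g x) (hη x) m t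
        simp only [Pi.add_apply, Pi.sub_apply]
        linarith
    rw [integral_add' (i2.sub (i1.const_mul _)) (i0.const_mul _),
      integral_sub' i2 (i1.const_mul _), integral_const_mul, integral_const_mul,
      integral_const_mul] at h
    exact h
  set W := tiltedMoment μ η (fun _ => 1) 1 F
  set W1 := tiltedMoment μ η g (-1) F
  set W2 := tiltedMoment μ η (fun x => g x * g x) 1 F
  have h := mul_le_mul_of_nonneg_left (key (W1 / W) (2 * I / W)) hW.le
  have e1 : W * (4 * (2 * I / W) * I) = 8 * I ^ 2 := by field_simp; ring
  have e2 : W * (W2 - 2 * (W1 / W) * W1 + ((W1 / W) ^ 2 + (2 * I / W) ^ 2) * W)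
      = W * W2 - W1 ^ 2 + 4 * I ^ 2 := by field_simp; ring
  rw [e1, e2] at h
  linarith

lemma risk_eq_tiltedMoment (F : X → ℝ) :
    ∫ x, (η x * Real.exp (-F x) + (1 - η x) * Real.exp (F x)) ∂μ
      = tiltedMoment μ η (fun _ => 1) 1 F := by
  unfold tiltedMoment
  congr 1
  ext x
  ring

/-- Convexity of the exponential risk. -/
lemma risk_convex (hη : ∀ x, 0 ≤ η x ∧ η x ≤ 1) {F G : X → ℝ} {ξ : ℝ} (h0 : 0 ≤ ξ) (h1 : ξ ≤ 1)
    (hFi : Integrable (fun x => η x * Real.exp (-F x) + (1 - η x) * Real.exp (F x)) μ)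
    (hGi : Integrable (fun x => η x * Real.exp (-G x) + (1 - η x) * Real.exp (G x)) μ)
    (hM : Integrable (fun x => η x * Real.exp (-((1 - ξ) • F + ξ • G) x)
      + (1 - η x) * Real.exp (((1 - ξ) • F + ξ • G) x)) μ) :
    ∫ x, (η x * Real.exp (-((1 - ξ) • F + ξ • G) x)
        + (1 - η x) * Real.exp (((1 - ξ) • F + ξ • G) x)) ∂μ
      ≤ (1 - ξ) * ∫ x, (η x * Real.exp (-F x) + (1 - η x) * Real.exp (F x)) ∂μ
        + ξ * ∫ x, (η x * Real.exp (-G x) + (1 - η x) * Real.exp (G x)) ∂μ := by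
  rw [← integral_const_mul, ← integral_const_mul,
    ← integral_add (hFi.const_mul _) (hGi.const_mul _)]
  refine integral_mono hM ((hFi.const_mul _).add (hGi.const_mul _)) fun x => ?_
  have c1 := convexOn_exp.2 (Set.mem_univ (F x)) (Set.mem_univ (G x)) (sub_nonneg.2 h1) h0
    (by ring)
  have c2 := convexOn_exp.2 (Set.mem_univ (-F x)) (Set.mem_univ (-G x)) (sub_nonneg.2 h1) h0
    (by ring)
  have e : -((1 - ξ) * F x + ξ * G x) = (1 - ξ) * -F x + ξ * -G x := by ring
  simp only [smul_eq_mul] at c1 c2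
  simp only [Pi.add_apply, Pi.smul_apply, smul_eq_mul, e]
  nlinarith [mul_le_mul_of_nonneg_left c2 (hη x).1,
    mul_le_mul_of_nonneg_left c1 (sub_nonneg.2 (hη x).2)]

end Moments

/-- Quadratic growth away from a critical point at `1`, on `[0, 1]`. -/
lemma quadratic_growth {ψ ψ' ψ'' : ℝ → ℝ} {K : ℝ} (h1 : ∀ x, HasDerivAt ψ (ψ' x) x)
    (h2 : ∀ x, HasDerivAt ψ' (ψ'' x) x) (hK : ∀ x ∈ Set.Ioo (0 : ℝ) 1, K ≤ ψ'' x)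
    (hcrit : ψ' 1 = 0) : ψ 1 + K / 2 ≤ ψ 0 := by
  have d2 : ∀ x, HasDerivAt (fun x => ψ' x - K * (x - 1)) (ψ'' x - K) x := fun x => by
    exact ((h2 x).sub (((hasDerivAt_id x).sub_const 1).const_mul K)).congr_deriv (by simp)
  have d1 : ∀ x, HasDerivAt (fun x => ψ x - K / 2 * (x - 1) ^ 2) (ψ' x - K * (x - 1)) x :=
      fun x => by
    refine ((h1 x).sub ((((hasDerivAt_id x).sub_const 1).pow 2).const_mul (K / 2))).congr_deriv ?_
    simp
    ring
  have mono : MonotoneOn (fun x => ψ' x - K * (x - 1)) (Set.Icc 0 1) := by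
    refine monotoneOn_of_deriv_nonneg (convex_Icc 0 1)
      (fun x _ => (d2 x).continuousAt.continuousWithinAt)
      (fun x _ => (d2 x).differentiableAt.differentiableWithinAt) fun x hx => ?_
    rw [interior_Icc] at hx
    rw [(d2 x).deriv]
    linarith [hK x hx]
  have anti : AntitoneOn (fun x => ψ x - K / 2 * (x - 1) ^ 2) (Set.Icc 0 1) := by
    refine antitoneOn_of_deriv_nonpos (convex_Icc 0 1)
      (fun x _ => (d1 x).continuousAt.continuousWithinAt)
      (fun x _ => (d1 x).differentiableAt.differentiableWithinAt) fun x hx => ?_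
    rw [interior_Icc] at hx
    rw [(d1 x).deriv]
    have := mono ⟨hx.1.le, hx.2.le⟩ (Set.right_mem_Icc.2 zero_le_one) hx.2.le
    simp only [hcrit] at this
    linarith
  have := anti (Set.left_mem_Icc.2 zero_le_one) (Set.right_mem_Icc.2 zero_le_one) zero_le_one
  norm_num at this
  linarith

/-- Lemma A.2 (exponential loss with exact line search): with
`A F = ln E_{X,Y} exp(-F(X)Y)`, the joint law of `(X, Y)` being given by the marginal `μ` of
`X` and the conditional probability `η x = P(Y = 1 | X = x)` (so that
`E_{X,Y} G(X,Y) = ∫ (η x · G x 1 + (1 - η x) · G x (-1)) dμ`), if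
`inf_{g ∈ S} E_X |g(X)| √(P(Y=1|X) P(Y=-1|X)) > 0` and each step-size `α k` of the greedy
boosting algorithm exactly minimizes `b ↦ A (f k + b • g k)`, then
`A''_{(1-ξ) f k + ξ f (k+1), g k}(0) ≥ exp(-2 A (f 0)) (E_X |g k(X)| √(2 P(Y=1|X) P(Y=-1|X)))² > 0`
for all `k` and `ξ ∈ (0,1)`; consequently `∑ j (α j)² < ∞`. Here `d1 F g` and `d2 F g`
denote the first and second derivatives of `h ↦ A (F + h g)`. -/
theorem exp_loss_exact_search_summable {X : Type*} [MeasurableSpace X]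
    (S : Set (X → ℝ))
    (hSbd : ∀ g ∈ S, ∀ x : X, |g x| ≤ 1)
    (hSmeas : ∀ g ∈ S, Measurable g)
    (μ : Measure X) [IsProbabilityMeasure μ]
    (η : X → ℝ) (hηmeas : Measurable η) (hη : ∀ x, 0 ≤ η x ∧ η x ≤ 1)
    (A : (X → ℝ) → ℝ)
    (hA : ∀ F : X → ℝ, A F =
      Real.log (∫ x, (η x * Real.exp (-F x) + (1 - η x) * Real.exp (F x)) ∂μ))
    (hInt : ∀ F ∈ Submodule.span ℝ S,
      Integrable (fun x => η x * Real.exp (-F x) + (1 - η x) * Real.exp (F x)) μ)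
    (d1 d2 : (X → ℝ) → (X → ℝ) → ℝ → ℝ)
    (hd1 : ∀ F ∈ Submodule.span ℝ S, ∀ g ∈ S, ∀ t : ℝ,
      HasDerivAt (fun u : ℝ => A (F + u • g)) (d1 F g t) t)
    (hd2 : ∀ F ∈ Submodule.span ℝ S, ∀ g ∈ S, ∀ t : ℝ, HasDerivAt (d1 F g) (d2 F g t) t)
    (hinf : ∃ c : ℝ, 0 < c ∧ ∀ g ∈ S,
      c ≤ ∫ x, |g x| * Real.sqrt (η x * (1 - η x)) ∂μ)
    (f : ℕ → X → ℝ) (α : ℕ → ℝ) (g : ℕ → X → ℝ)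
    (hf0 : f 0 ∈ Submodule.span ℝ S) (hg : ∀ k, g k ∈ S)
    (hstep : ∀ k, f (k + 1) = f k + α k • g k)
    (hexact : ∀ k (b : ℝ), A (f (k + 1)) ≤ A (f k + b • g k)) :
    (∀ k : ℕ, ∀ ξ ∈ Set.Ioo (0 : ℝ) 1,
      Real.exp (-(2 * A (f 0)))
          * (∫ x, |g k x| * Real.sqrt (2 * η x * (1 - η x)) ∂μ) ^ 2
        ≤ d2 ((1 - ξ) • f k + ξ • f (k + 1)) (g k) 0) ∧
    (∀ k : ℕ, 0 < Real.exp (-(2 * A (f 0)))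
        * (∫ x, |g k x| * Real.sqrt (2 * η x * (1 - η x)) ∂μ) ^ 2) ∧
    Summable (fun j => α j ^ 2) := by
  obtain ⟨c, hc, hcS⟩ := hinf
  have hmeas : ∀ F ∈ Submodule.span ℝ S, Measurable F := fun F hF => by
    induction hF using Submodule.span_induction with
    | mem x h => exact hSmeas x h
    | zero => exact measurable_const
    | add x y _ _ hx hy => exact hx.add hy
    | smul r x _ hx => exact hx.const_smul r
  have hspan : ∀ F ∈ Submodule.span ℝ S, ∀ φ ∈ S, ∀ u : ℝ, F + u • φ ∈ Submodule.span ℝ S :=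
    fun F hF φ hφ u => Submodule.add_mem _ hF (Submodule.smul_mem _ _ (Submodule.subset_span hφ))
  have hpos := fun F (hF : F ∈ Submodule.span ℝ S) => risk_integral_pos hη (hInt F hF)
  have hexpA : ∀ F ∈ Submodule.span ℝ S,
      Real.exp (A F) = tiltedMoment μ η (fun _ => 1) 1 F := fun F hF => by
    rw [hA, Real.exp_log (hpos F hF), risk_eq_tiltedMoment]
  have hf : ∀ k, f k ∈ Submodule.span ℝ S := fun k => by
    induction k with
    | zero => exact hf0
    | succ k ih => rw [hstep]; exact hspan _ ih _ (hg k) _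
  have hdec : ∀ k, A (f (k + 1)) ≤ A (f k) := fun k => by simpa using hexact k 0
  have hA0 : ∀ k, A (f k) ≤ A (f 0) := fun k => by
    induction k with
    | zero => exact le_rfl
    | succ k ih => exact (hdec k).trans ih
  have hcurv : ∀ F ∈ Submodule.span ℝ S, ∀ φ ∈ S, ∀ t : ℝ,
      Real.exp (-(2 * A (F + t • φ))) *
        (4 * (∫ x, |φ x| * Real.sqrt (η x * (1 - η x)) ∂μ) ^ 2) ≤ d2 F φ t := by
    intro F hF φ hφ t
    have hm := hmeas F hF
    have hφm := hSmeas φ hφ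
    have hφ1 := hSbd φ hφ
    have hline := fun u : ℝ => hInt _ (hspan F hF φ hφ u)
    have hWpos : ∀ u : ℝ, 0 < tiltedMoment μ η (fun _ => 1) 1 (F + u • φ) := fun u => by
      rw [← risk_eq_tiltedMoment]
      exact hpos _ (hspan F hF φ hφ u)
    have D1 : ∀ u : ℝ, HasDerivAt (fun u : ℝ => tiltedMoment μ η (fun _ => 1) 1 (F + u • φ))
        (tiltedMoment μ η φ (-1) (F + u • φ)) u := fun u => by
      simpa using hasDerivAt_tiltedMoment hηmeas hη hm (hInt F hF) hφm hφ1 hline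
        (ψ := fun _ => 1) (ε := 1) (by fun_prop) (by simp) (by simp) u
    have D2 : ∀ u : ℝ, HasDerivAt (fun u : ℝ => tiltedMoment μ η φ (-1) (F + u • φ))
        (tiltedMoment μ η (fun x => φ x * φ x) 1 (F + u • φ)) u := fun u => by
      simpa using hasDerivAt_tiltedMoment hηmeas hη hm (hInt F hF) hφm hφ1 hline
        (ψ := φ) (ε := -1) hφm hφ1 (by simp) u
    have hAeq : (fun u : ℝ => A (F + u • φ))
        = fun u => Real.log (tiltedMoment μ η (fun _ => 1) 1 (F + u • φ)) := by
      funext u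
      rw [hA, risk_eq_tiltedMoment]
    have hd1eq : d1 F φ = fun u => tiltedMoment μ η φ (-1) (F + u • φ)
        / tiltedMoment μ η (fun _ => 1) 1 (F + u • φ) := by
      funext u
      have h := hd1 F hF φ hφ u
      rw [hAeq] at h
      exact h.unique ((D1 u).log (hWpos u).ne')
    have h := hd2 F hF φ hφ t
    rw [hd1eq] at h
    rw [h.unique ((D2 t).div (D1 t) (hWpos t).ne')]
    have hvar := four_mul_sq_le_risk_mul_sub hηmeas hη (hmeas _ (hspan F hF φ hφ t)) (hline t)
      hφm hφ1 (hWpos t)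
    have hexp : Real.exp (-(2 * A (F + t • φ)))
        = (tiltedMoment μ η (fun _ => 1) 1 (F + t • φ) ^ 2)⁻¹ := by
      rw [← hexpA _ (hspan F hF φ hφ t), Real.exp_neg, ← Real.exp_nat_mul]
      norm_num
    rw [hexp, inv_mul_eq_div]
    have := hWpos t
    gcongr
    linarith
  -- the risk, hence `A`, stays below its initial value on each segment
  have hseg : ∀ k, ∀ ξ ∈ Set.Ioo (0 : ℝ) 1,
      A ((1 - ξ) • f k + ξ • f (k + 1)) ≤ A (f 0) := by
    intro k ξ hξ
    have hmem : (1 - ξ) • f k + ξ • f (k + 1) ∈ Submodule.span ℝ S :=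
      Submodule.add_mem _ (Submodule.smul_mem _ _ (hf k)) (Submodule.smul_mem _ _ (hf (k + 1)))
    have hcv := risk_convex hη hξ.1.le hξ.2.le (hInt _ (hf k)) (hInt _ (hf (k + 1))) (hInt _ hmem)
    simp only [risk_eq_tiltedMoment] at hcv
    rw [← hexpA _ hmem, ← hexpA _ (hf k), ← hexpA _ (hf (k + 1))] at hcv
    have e0 := Real.exp_le_exp.2 (hA0 k)
    have e1 := Real.exp_le_exp.2 (hA0 (k + 1))
    apply Real.exp_le_exp.1
    nlinarith [hξ.1, hξ.2]
  have hcomb : ∀ k (ξ : ℝ), (1 - ξ) • f k + ξ • f (k + 1) = f k + (ξ * α k) • g k := by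
    intro k ξ
    rw [hstep]
    module
  have hsqrt : ∀ k, (∫ x, |g k x| * Real.sqrt (2 * η x * (1 - η x)) ∂μ) ^ 2
      = 2 * (∫ x, |g k x| * Real.sqrt (η x * (1 - η x)) ∂μ) ^ 2 := by
    intro k
    have : ∀ x, |g k x| * Real.sqrt (2 * η x * (1 - η x))
        = Real.sqrt 2 * (|g k x| * Real.sqrt (η x * (1 - η x))) := fun x => by
      rw [mul_assoc 2, Real.sqrt_mul zero_le_two]
      ring
    simp only [this]
    rw [integral_const_mul, mul_pow, Real.sq_sqrt zero_le_two]
  have hexpseg : ∀ k, ∀ ξ ∈ Set.Ioo (0 : ℝ) 1, Real.exp (-(2 * A (f 0)))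
      ≤ Real.exp (-(2 * A ((1 - ξ) • f k + ξ • f (k + 1)))) := fun k ξ hξ =>
    Real.exp_le_exp.2 (by linarith [hseg k ξ hξ])
  refine ⟨?_, ?_, ?_⟩
  · intro k ξ hξ
    have hmem : (1 - ξ) • f k + ξ • f (k + 1) ∈ Submodule.span ℝ S := by
      rw [hcomb]
      exact hspan _ (hf k) _ (hg k) _
    have h := hcurv _ hmem _ (hg k) 0
    rw [zero_smul, add_zero] at h
    refine le_trans ?_ h
    rw [hsqrt]
    have := hexpseg k ξ hξ
    gcongr
    norm_num
  · intro k
    have := hc.trans_le (hcS _ (hg k))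
    rw [hsqrt]
    positivity
  · set K := Real.exp (-(2 * A (f 0))) * (4 * c ^ 2) with hKdef
    have hKpos : 0 < K := by positivity
    have hdrop : ∀ k, A (f (k + 1)) + K / 2 * α k ^ 2 ≤ A (f k) := by
      intro k
      have hlin : ∀ ξ : ℝ, HasDerivAt (fun ξ : ℝ => ξ * α k) (α k) ξ := fun ξ => by
        simpa using (hasDerivAt_id ξ).mul_const (α k)
      have q1 : ∀ ξ : ℝ, HasDerivAt (fun ξ : ℝ => A (f k + (ξ * α k) • g k))
          (d1 (f k) (g k) (ξ * α k) * α k) ξ := fun ξ =>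
        HasDerivAt.comp (h₂ := fun u : ℝ => A (f k + u • g k)) ξ
          (hd1 (f k) (hf k) (g k) (hg k) (ξ * α k)) (hlin ξ)
      have q2 : ∀ ξ : ℝ, HasDerivAt (fun ξ : ℝ => d1 (f k) (g k) (ξ * α k) * α k)
          (d2 (f k) (g k) (ξ * α k) * α k * α k) ξ := fun ξ =>
        (HasDerivAt.comp ξ (hd2 (f k) (hf k) (g k) (hg k) (ξ * α k)) (hlin ξ)).mul_const _
      have hmin : IsLocalMin (fun u : ℝ => A (f k + u • g k)) (α k) :=
        Eventually.of_forall fun b => by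
          have := hexact k b
          rw [hstep] at this
          exact this
      have hcrit : d1 (f k) (g k) (α k) = 0 :=
        hmin.hasDerivAt_eq_zero (hd1 (f k) (hf k) (g k) (hg k) (α k))
      have := quadratic_growth (K := K * α k ^ 2) q1 q2 (fun ξ hξ => ?_) (by simp [hcrit])
      · simp only [one_mul, zero_mul, zero_smul, add_zero, ← hstep] at this
        linarith
      · have h := hcurv _ (hf k) _ (hg k) (ξ * α k)
        rw [← hcomb] at h
        have h2 : K ≤ d2 (f k) (g k) (ξ * α k) := by
          refine le_trans ?_ h
          have h3 := hexpseg k ξ hξ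
          have h4 := hcS _ (hg k)
          rw [hKdef]
          gcongr
        nlinarith [sq_nonneg (α k)]
    -- `a + b ≥ 2 √(a b)` bounds the risk below by `2 c`
    have hlow : ∀ k, Real.log (2 * c) ≤ A (f k) := by
      intro k
      rw [hA]
      apply Real.log_le_log (by positivity)
      refine le_trans (mul_le_mul_of_nonneg_left (hcS _ (hg k)) zero_le_two) ?_
      rw [← integral_const_mul]
      refine integral_mono ((integrable_abs_mul_sqrt hηmeas hη (hSmeas _ (hg k))
        (hSbd _ (hg k))).const_mul _) (hInt _ (hf k)) fun x => ?_
      have ha := Real.sq_sqrt (mul_nonneg (hη x).1 (Real.exp_pos (-f k x)).le)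
      have hb := Real.sq_sqrt (mul_nonneg (sub_nonneg.2 (hη x).2) (Real.exp_pos (f k x)).le)
      have hs := sqrt_mul_exp_eq (y := f k x) (hη x)
      have hs0 := Real.sqrt_nonneg (η x * (1 - η x))
      have hg1 := hSbd _ (hg k) x
      nlinarith [sq_nonneg (Real.sqrt (η x * Real.exp (-f k x))
        - Real.sqrt ((1 - η x) * Real.exp (f k x))), mul_le_mul_of_nonneg_right hg1 hs0]
    have htel : ∀ n, K / 2 * ∑ j ∈ Finset.range n, α j ^ 2 ≤ A (f 0) - A (f n) := by
      intro n
      induction n with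
      | zero => simp
      | succ n ih =>
        rw [Finset.sum_range_succ, mul_add]
        linarith [hdrop n]
    refine summable_of_sum_range_le (c := (A (f 0) - Real.log (2 * c)) / (K / 2))
      (fun j => sq_nonneg _) fun n => ?_
    rw [le_div_iff₀ (by positivity), mul_comm]
    linarith [htel n, hlow n]
end

section
/- (Second-derivative bound for the exponential loss.) Let A(f) = ln E_{X,Y} exp(−f(X)Y), where Y = ±1 and sup_{g∈S,x}|g(x)| ≤ 1. Then for all f ∈ span(S) and g ∈ S, the second derivative of h ↦ A(f + hg) at h = 0 equals E[g(X)²Y² e^{−f(X)Y}]/E[e^{−f(X)Y}] − (E[g(X)Y e^{−f(X)Y}]/E[e^{−f(X)Y}])², and this quantity is at most 1. -/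
open Filter Finset Set MeasureTheory

/-!
Put `u = g(X) Y` and `w = exp (-f(X) Y)`, so that `|u| ≤ 1` almost surely and `w` is positive and
integrable. The partition function of `h ↦ A (f + h g)` is `Z₀ h = E[w exp (-h u)]`, and with
`Zₙ h = E[uⁿ w exp (-h u)]` dominated convergence gives `Zₙ' = -Zₙ₊₁`
(`hasDerivAt_weightedMoment`). Hence `(log Z₀)' = -Z₁ / Z₀`, and the quotient rule gives
`(log Z₀)'' = Z₂ / Z₀ - (Z₁ / Z₀)²`. The bound holds because `u² ≤ 1` forces `Z₂ ≤ Z₀`, and the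
subtracted square is nonnegative.
-/

/-- The `n`-th moment of `u` under the density `w` tilted by `exp (-t u)`, without
normalization. -/
noncomputable def weightedMoment {Ω : Type*} [MeasurableSpace Ω] (μ : Measure Ω)
    (u w : Ω → ℝ) (n : ℕ) (t : ℝ) : ℝ :=
  ∫ z, u z ^ n * (w z * Real.exp (-(t * u z))) ∂μ

/-- Differentiation under the integral sign: as `|u| ≤ 1`, on the unit ball around `t` the
derivative of the integrand is dominated by `|w| exp (|t| + 1)`. -/
lemma hasDerivAt_weightedMoment {Ω : Type*} [MeasurableSpace Ω] {μ : Measure Ω}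
    {u w : Ω → ℝ} (hu : AEStronglyMeasurable u μ) (hu1 : ∀ᵐ z ∂μ, |u z| ≤ 1)
    (hw : Integrable w μ) (n : ℕ) (t : ℝ) :
    HasDerivAt (weightedMoment μ u w n) (-weightedMoment μ u w (n + 1) t) t := by
  have hmeas : ∀ (k : ℕ) (x : ℝ),
      AEStronglyMeasurable (fun z => u z ^ k * (w z * Real.exp (-(x * u z)))) μ := fun k x =>
    (hu.pow k).mul (hw.1.mul (Real.continuous_exp.comp_aestronglyMeasurable
      (hu.const_mul x).neg))
  have hbd : ∀ᵐ z ∂μ, ∀ (k : ℕ), ∀ x ∈ Metric.ball t 1,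
      ‖u z ^ k * (w z * Real.exp (-(x * u z)))‖ ≤ |w z| * Real.exp (|t| + 1) := by
    filter_upwards [hu1] with z hz k x hx
    rw [Metric.mem_ball, Real.dist_eq] at hx
    have h1 : |x| ≤ |t| + 1 := by
      have := abs_sub_abs_le_abs_sub x t
      linarith
    have h2 : -(x * u z) ≤ |t| + 1 := calc
      -(x * u z) ≤ |x * u z| := neg_le_abs _
      _ = |x| * |u z| := abs_mul _ _
      _ ≤ |x| := mul_le_of_le_one_right (abs_nonneg _) hz
      _ ≤ |t| + 1 := h1
    have h3 : |u z| ^ k ≤ 1 := pow_le_one₀ (abs_nonneg _) hz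
    rw [Real.norm_eq_abs, abs_mul, abs_mul, abs_pow, Real.abs_exp]
    calc |u z| ^ k * (|w z| * Real.exp (-(x * u z)))
        ≤ |w z| * Real.exp (-(x * u z)) := mul_le_of_le_one_left (by positivity) h3
      _ ≤ |w z| * Real.exp (|t| + 1) := by gcongr
  have hbi : Integrable (fun z => |w z| * Real.exp (|t| + 1)) μ := hw.abs.mul_const _
  have hF : Integrable (fun z => u z ^ n * (w z * Real.exp (-(t * u z)))) μ :=
    hbi.mono' (hmeas n t) (hbd.mono fun z hz => hz n t (Metric.mem_ball_self one_pos))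
  have key := (hasDerivAt_integral_of_dominated_loc_of_deriv_le (μ := μ)
    (F := fun x z => u z ^ n * (w z * Real.exp (-(x * u z))))
    (F' := fun x z => -(u z ^ (n + 1) * (w z * Real.exp (-(x * u z)))))
    (Metric.ball_mem_nhds t one_pos) (Eventually.of_forall fun x => hmeas n x) hF
    (hmeas (n + 1) t).neg
    (hbd.mono fun z hz x hx => by rw [norm_neg]; exact hz (n + 1) x hx) hbi
    (Eventually.of_forall fun z x _ => by
      have h := ((((hasDerivAt_id x).mul_const (u z)).neg.exp).const_mul (w z)).const_mul
        (u z ^ n)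
      refine h.congr_deriv ?_
      simp only [id, Pi.neg_apply]
      ring)).2
  rw [integral_neg] at key
  exact key

/-- Section A.1.2: second-derivative bound for the exponential loss. With
`A f = ln E exp(-f(X)Y)`, `Y = ±1` a.s. and `sup_{g ∈ S, x} |g x| ≤ 1`, for every `f` in the
span of `S` and `g ∈ S`, the function `h ↦ A (f + h g)` is twice differentiable and its
second derivative at `0` equals
`E[g(X)² Y² e^{-f(X)Y}]/E[e^{-f(X)Y}] - (E[g(X) Y e^{-f(X)Y}]/E[e^{-f(X)Y}])²`,
a quantity which is at most `1`. -/
theorem exp_loss_second_derivative {X : Type*} [MeasurableSpace X]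
    (S : Set (X → ℝ))
    (hSbd : ∀ g ∈ S, ∀ x : X, |g x| ≤ 1)
    (hSmeas : ∀ g ∈ S, Measurable g)
    (D : Measure (X × ℝ)) [IsProbabilityMeasure D]
    (hD : ∀ᵐ z ∂D, z.2 = 1 ∨ z.2 = -1)
    (hInt : ∀ f ∈ Submodule.span ℝ S,
      Integrable (fun z : X × ℝ => Real.exp (-(f z.1 * z.2))) D)
    (f : X → ℝ) (hf : f ∈ Submodule.span ℝ S) (g : X → ℝ) (hg : g ∈ S) :
    ∃ d1 : ℝ → ℝ,
      (∀ h : ℝ, HasDerivAt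
        (fun t : ℝ => Real.log (∫ z, Real.exp (-((f + t • g) z.1 * z.2)) ∂D)) (d1 h) h) ∧
      HasDerivAt d1
        ((∫ z, g z.1 ^ 2 * z.2 ^ 2 * Real.exp (-(f z.1 * z.2)) ∂D)
            / (∫ z, Real.exp (-(f z.1 * z.2)) ∂D)
          - ((∫ z, g z.1 * z.2 * Real.exp (-(f z.1 * z.2)) ∂D)
            / (∫ z, Real.exp (-(f z.1 * z.2)) ∂D)) ^ 2) 0 ∧
      ((∫ z, g z.1 ^ 2 * z.2 ^ 2 * Real.exp (-(f z.1 * z.2)) ∂D)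
            / (∫ z, Real.exp (-(f z.1 * z.2)) ∂D)
          - ((∫ z, g z.1 * z.2 * Real.exp (-(f z.1 * z.2)) ∂D)
            / (∫ z, Real.exp (-(f z.1 * z.2)) ∂D)) ^ 2) ≤ 1 := by
  have hu : AEStronglyMeasurable (fun z : X × ℝ => g z.1 * z.2) D :=
    (((hSmeas g hg).comp measurable_fst).mul measurable_snd).aestronglyMeasurable
  have hu1 : ∀ᵐ z ∂D, |g z.1 * z.2| ≤ 1 := by
    filter_upwards [hD] with z hz
    have := hSbd g hg z.1
    rcases hz with hz | hz <;> simpa [hz] using this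
  have hw := hInt f hf
  set u : X × ℝ → ℝ := fun z => g z.1 * z.2 with hu_def
  set w : X × ℝ → ℝ := fun z => Real.exp (-(f z.1 * z.2)) with hw_def
  set Z := weightedMoment D u w with hZ
  have hZ0 : ∀ t : ℝ, Z 0 t = ∫ z, Real.exp (-((f + t • g) z.1 * z.2)) ∂D := by
    intro t
    refine integral_congr_ae (Eventually.of_forall fun z => ?_)
    simp only [hu_def, hw_def, pow_zero, one_mul, ← Real.exp_add, Pi.add_apply, Pi.smul_apply,
      smul_eq_mul]
    congr 1
    ring
  have hpos : ∀ t : ℝ, 0 < Z 0 t := by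
    intro t
    rw [hZ0]
    exact integral_exp_pos (hInt _ (add_mem hf
      (Submodule.smul_mem _ t (Submodule.subset_span hg))))
  have e0 : ∫ z, w z ∂D = Z 0 0 := by
    simp [hZ, weightedMoment]
  have e1 : ∫ z, g z.1 * z.2 * w z ∂D = Z 1 0 := by
    simp [hZ, weightedMoment, hu_def]
  have e2 : ∫ z, g z.1 ^ 2 * z.2 ^ 2 * w z ∂D = Z 2 0 := by
    simp [hZ, weightedMoment, hu_def, mul_pow]
  have hder : ∀ n t, HasDerivAt (Z n) (-Z (n + 1) t) t :=
    fun n t => hasDerivAt_weightedMoment hu hu1 hw n t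
  have hle : Z 2 0 ≤ Z 0 0 := by
    refine integral_mono_of_nonneg (Eventually.of_forall fun z => ?_) ?_ ?_
    · simp only [hw_def, Pi.zero_apply]
      positivity
    · simpa using hw
    · filter_upwards [hu1] with z hz
      have h1 : u z ^ 2 ≤ 1 := (sq_le_one_iff_abs_le_one _).2 hz
      have h2 : 0 ≤ w z := (Real.exp_pos _).le
      simpa using mul_le_of_le_one_left h2 h1
  rw [e0, e1, e2]
  refine ⟨fun t => -Z 1 t / Z 0 t, fun h => ?_, ?_, ?_⟩
  · simp only [← hZ0]
    exact (hder 0 h).log (hpos h).ne'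
  · have hne := (hpos 0).ne'
    refine ((hder 1 0).neg.div (hder 0 0) hne).congr_deriv ?_
    simp only [Pi.neg_apply]
    field_simp
  · have h1 : Z 2 0 / Z 0 0 ≤ 1 := (div_le_one (hpos 0)).2 hle
    have h2 := sq_nonneg (Z 1 0 / Z 0 0)
    linarith
end

section
/- (Second-derivative bound for the p-norm loss.) Fix p ≥ 2 and let A(f) = (1/(2(p−1)))·(E_{X,Y} |f(X) − Y|^p)^{2/p}, where E_Y|Y|^p < ∞ and sup_{g∈S} E_X |g(X)|^p ≤ 1. Then for all f ∈ span(S), g ∈ S and all h ∈ ℝ, the second derivative of t ↦ A(f + tg) at t = h satisfies A''_{f,g}(h) ≤ (E_X |g(X)|^p)^{2/p} ≤ 1. -/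
open Filter Finset Set MeasureTheory

/-!
Write `u = f(X) - Y`, `v = g(X)`, `F t = E|u + t v|^p` and `G = E|v|^p`; all that matters is that
`u, v ∈ L^p`.

If `F t₀ = 0` for some `t₀`, then `u = -t₀ v` almost surely, so `A (f + t g)` is the quadratic
`(t - t₀)^2 G^{2/p} / (2(p-1))`, with second derivative `G^{2/p}/(p-1) ≤ G^{2/p}`.

Otherwise `F > 0` everywhere. Differentiating twice under the integral (`hasDerivAt_F`,
`hasDerivAt_F1`) gives `F'' = p(p-1) E[|u+tv|^{p-2} v^2]`. In the second derivative of
`F^{2/p}` the term containing `(F')^2` has the factor `2/p - 1 ≤ 0`, and Hölder with exponents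
`p/(p-2)` and `p/2` (`holder_bound`) bounds the other one by
`F^{2/p-1} · F^{1-2/p} · G^{2/p} = G^{2/p}`, once the factor `1/(2(p-1))` is included.
-/

namespace PNormLoss

lemma rpow_sub_two_mul_sq {M p : ℝ} (hM : 0 ≤ M) (hp : 2 ≤ p) : M ^ (p - 2) * M ^ 2 = M ^ p := by
  rw [← Real.rpow_two, ← Real.rpow_add_of_nonneg hM (by linarith) (by norm_num)]
  congr 1; ring

/-- The derivative of `x ↦ |x|^{p-2} x`. At `p = 2` the formula relies on `0 ^ 0 = 1`. -/
lemma hasDerivAt_abs_rpow_mul {p : ℝ} (hp : 2 ≤ p) (x : ℝ) :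
    HasDerivAt (fun y : ℝ => |y| ^ (p - 2) * y) ((p - 1) * |x| ^ (p - 2)) x := by
  rcases hp.eq_or_lt with rfl | hp
  · have : (fun y : ℝ => |y| ^ ((2:ℝ) - 2) * y) = id := by
      funext y; simp
    rw [this]
    refine (hasDerivAt_id x).congr_deriv ?_
    norm_num
  · rcases eq_or_ne x 0 with rfl | hx
    · rw [hasDerivAt_iff_tendsto_slope]
      have h0 : (p - 1) * |(0:ℝ)| ^ (p - 2) = 0 := by
        rw [abs_zero, Real.zero_rpow (by linarith), mul_zero]
      rw [h0]
      have hc : Tendsto (fun y : ℝ => |y| ^ (p - 2)) (nhdsWithin 0 {0}ᶜ) (nhds 0) := by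
        have : Continuous (fun y : ℝ => |y| ^ (p - 2)) :=
          continuous_abs.rpow_const (fun _ => Or.inr (by linarith))
        have h := this.tendsto 0
        rw [abs_zero, Real.zero_rpow (by linarith)] at h
        exact h.mono_left nhdsWithin_le_nhds
      refine hc.congr' ?_
      filter_upwards [self_mem_nhdsWithin] with y hy
      have hy : y ≠ 0 := hy
      simp [slope_def_field, hy]
    · have h1 := ((hasDerivAt_abs hx).rpow_const (p := p - 2) (Or.inl (abs_ne_zero.2 hx))).mul
        (hasDerivAt_id x)
      refine h1.congr_deriv ?_
      have h2 : |x| ^ (p - 2) = |x| ^ (p - 2 - 1) * |x| := by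
        rw [← Real.rpow_add_one (abs_ne_zero.2 hx)]; congr 1; ring
      have h3 : (SignType.sign x : ℝ) * x = |x| := sign_mul_self x
      simp only [id]
      rw [h2]
      linear_combination ((p - 2) * |x| ^ (p - 2 - 1)) * h3

section
variable {Ω : Type*} [MeasurableSpace Ω] {μ : Measure Ω} {p : ℝ} {u v : Ω → ℝ}

lemma integrable_abs_rpow (hp : 2 ≤ p) (hu : MemLp u (ENNReal.ofReal p) μ) :
    Integrable (fun z => |u z| ^ p) μ := by
  have h := hu.integrable_norm_rpow (by simp; linarith) (by simp)
  rw [ENNReal.toReal_ofReal (by linarith)] at h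
  simpa using h

lemma memLp_of_integrable (hp : 2 ≤ p) (hm : AEStronglyMeasurable u μ)
    (hu : Integrable (fun z => |u z| ^ p) μ) : MemLp u (ENNReal.ofReal p) μ := by
  rw [← integrable_norm_rpow_iff hm (by simp; linarith) (by simp),
    ENNReal.toReal_ofReal (by linarith)]
  simpa using hu

/-- For `|t - t₀| < 1` all integrands are dominated through
`|u + t v| ≤ |u| + (|t₀| + 1) |v|`; the right-hand side is in `L^p` and also bounds `|v|`. -/
lemma integrable_dom (hp : 2 ≤ p) (hu : MemLp u (ENNReal.ofReal p) μ)
    (hv : MemLp v (ENNReal.ofReal p) μ) (t₀ : ℝ) :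
    Integrable (fun z => (|u z| + (|t₀| + 1) * |v z|) ^ p) μ := by
  have h := integrable_abs_rpow hp (hu.abs.add (hv.abs.const_mul (|t₀| + 1)))
  refine h.congr (Eventually.of_forall fun z => ?_)
  have h0 : 0 ≤ |u z| + (|t₀| + 1) * |v z| := by positivity
  simp only [Pi.add_apply, Pi.abs_apply]
  rw [abs_of_nonneg h0]

lemma dom_bound {t t₀ : ℝ} (ht : t ∈ Metric.ball t₀ 1) (a b : ℝ) :
    |a + t * b| ≤ |a| + (|t₀| + 1) * |b| := by
  have h1 : |t| ≤ |t₀| + 1 := by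
    rw [Metric.mem_ball, Real.dist_eq] at ht
    have := abs_sub_abs_le_abs_sub t t₀
    linarith
  calc |a + t * b| ≤ |a| + |t * b| := abs_add_le _ _
    _ ≤ _ := by rw [abs_mul]; gcongr

lemma dom_bound' (t₀ a b : ℝ) : |b| ≤ |a| + (|t₀| + 1) * |b| := by
  have := abs_nonneg a
  have := mul_nonneg (abs_nonneg t₀) (abs_nonneg b)
  linarith

lemma hasDerivAt_affine (a b t : ℝ) : HasDerivAt (fun t : ℝ => a + t * b) b t := by
  simpa using ((hasDerivAt_id t).mul_const b).const_add a

lemma bound_one {M x b : ℝ} (hp : 2 ≤ p) (hx : |x| ≤ M) (hb : |b| ≤ M) :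
    ‖|x| ^ (p - 2) * x * b‖ ≤ M ^ p := by
  have hM : 0 ≤ M := (abs_nonneg x).trans hx
  rw [norm_mul, norm_mul, Real.norm_of_nonneg (by positivity), Real.norm_eq_abs, Real.norm_eq_abs,
    ← rpow_sub_two_mul_sq hM hp, sq, mul_assoc]
  gcongr

lemma bound_two {M x b : ℝ} (hp : 2 ≤ p) (hx : |x| ≤ M) (hb : |b| ≤ M) :
    ‖|x| ^ (p - 2) * b ^ 2‖ ≤ M ^ p := by
  have hM : 0 ≤ M := (abs_nonneg x).trans hx
  rw [Real.norm_of_nonneg (by positivity), ← rpow_sub_two_mul_sq hM hp, ← sq_abs b]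
  gcongr

lemma aesm_first (hp : 2 ≤ p) (hu : MemLp u (ENNReal.ofReal p) μ)
    (hv : MemLp v (ENNReal.ofReal p) μ) (t : ℝ) :
    AEStronglyMeasurable (fun z => |u z + t * v z| ^ (p - 2) * (u z + t * v z) * v z) μ := by
  have hc : Continuous (fun y : ℝ => |y| ^ (p - 2) * y) :=
    (continuous_abs.rpow_const (fun _ => Or.inr (by linarith))).mul continuous_id
  exact (hc.comp_aestronglyMeasurable (hu.1.add (hv.1.const_mul t))).mul hv.1

lemma aesm_second (hp : 2 ≤ p) (hu : MemLp u (ENNReal.ofReal p) μ)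
    (hv : MemLp v (ENNReal.ofReal p) μ) (t : ℝ) :
    AEStronglyMeasurable (fun z => |u z + t * v z| ^ (p - 2) * v z ^ 2) μ := by
  have hc : Continuous (fun y : ℝ => |y| ^ (p - 2)) :=
    continuous_abs.rpow_const (fun _ => Or.inr (by linarith))
  exact (hc.comp_aestronglyMeasurable (hu.1.add (hv.1.const_mul t))).mul (hv.1.pow 2)

lemma hasDerivAt_F (hp : 2 ≤ p) (hu : MemLp u (ENNReal.ofReal p) μ)
    (hv : MemLp v (ENNReal.ofReal p) μ) (t : ℝ) :
    HasDerivAt (fun t => ∫ z, |u z + t * v z| ^ p ∂μ)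
      (p * ∫ z, |u z + t * v z| ^ (p - 2) * (u z + t * v z) * v z ∂μ) t := by
  have hI : ∀ t : ℝ, Integrable (fun z => |u z + t * v z| ^ p) μ := fun t =>
    integrable_abs_rpow hp (hu.add (hv.const_mul t))
  rw [← integral_const_mul]
  refine (hasDerivAt_integral_of_dominated_loc_of_deriv_le (μ := μ)
    (F' := fun t z => p * (|u z + t * v z| ^ (p - 2) * (u z + t * v z) * v z))
    (bound := fun z => p * (|u z| + (|t| + 1) * |v z|) ^ p)
    (Metric.ball_mem_nhds t one_pos) (Eventually.of_forall fun t => (hI t).1) (hI t)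
    ((aesm_first hp hu hv t).const_mul p) ?_ ((integrable_dom hp hu hv t).const_mul p) ?_).2
  · refine Eventually.of_forall fun z s hs => ?_
    rw [norm_mul, Real.norm_of_nonneg (by linarith)]
    exact mul_le_mul_of_nonneg_left (bound_one hp (dom_bound hs _ _) (dom_bound' _ _ _))
      (by linarith)
  · refine Eventually.of_forall fun z s _ => ?_
    refine ((hasDerivAt_abs_rpow (u z + s * v z) (p := p) (by linarith)).comp s
      (hasDerivAt_affine (u z) (v z) s)).congr_deriv ?_
    ring

lemma hasDerivAt_F1 (hp : 2 ≤ p) (hu : MemLp u (ENNReal.ofReal p) μ)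
    (hv : MemLp v (ENNReal.ofReal p) μ) (t : ℝ) :
    HasDerivAt (fun t => ∫ z, |u z + t * v z| ^ (p - 2) * (u z + t * v z) * v z ∂μ)
      ((p - 1) * ∫ z, |u z + t * v z| ^ (p - 2) * v z ^ 2 ∂μ) t := by
  have hI : Integrable (fun z => |u z + t * v z| ^ (p - 2) * (u z + t * v z) * v z) μ :=
    (integrable_dom hp hu hv t).mono' (aesm_first hp hu hv t) (Eventually.of_forall fun z =>
      bound_one hp (dom_bound (Metric.mem_ball_self one_pos) _ _) (dom_bound' _ _ _))
  rw [← integral_const_mul]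
  refine (hasDerivAt_integral_of_dominated_loc_of_deriv_le (μ := μ)
    (F' := fun t z => (p - 1) * (|u z + t * v z| ^ (p - 2) * v z ^ 2))
    (bound := fun z => (p - 1) * (|u z| + (|t| + 1) * |v z|) ^ p)
    (Metric.ball_mem_nhds t one_pos) (Eventually.of_forall fun t => aesm_first hp hu hv t) hI
    ((aesm_second hp hu hv t).const_mul _) ?_ ((integrable_dom hp hu hv t).const_mul _) ?_).2
  · refine Eventually.of_forall fun z s hs => ?_
    rw [norm_mul, Real.norm_of_nonneg (by linarith)]
    exact mul_le_mul_of_nonneg_left (bound_two hp (dom_bound hs _ _) (dom_bound' _ _ _))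
      (by linarith)
  · refine Eventually.of_forall fun z s _ => ?_
    refine (((hasDerivAt_abs_rpow_mul hp (u z + s * v z)).comp s
      (hasDerivAt_affine (u z) (v z) s)).mul_const (v z)).congr_deriv ?_
    ring

lemma holder_bound (hp : 2 ≤ p) (hu : MemLp u (ENNReal.ofReal p) μ)
    (hv : MemLp v (ENNReal.ofReal p) μ) :
    ∫ z, |u z| ^ (p - 2) * v z ^ 2 ∂μ
      ≤ (∫ z, |u z| ^ p ∂μ) ^ (1 - 2 / p) * (∫ z, |v z| ^ p ∂μ) ^ (2 / p) := by
  rcases hp.eq_or_lt with rfl | hp'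
  · simp
  have hp0 : 0 < p := by linarith
  have hp2 : 0 < p - 2 := by linarith
  have hpow1 : ∀ z, (|u z| ^ (p - 2)) ^ (p / (p - 2)) = |u z| ^ p := fun z => by
    rw [← Real.rpow_mul (abs_nonneg _)]; congr 1; field_simp
  have hpow2 : ∀ z, (v z ^ 2) ^ (p / 2) = |v z| ^ p := fun z => by
    rw [← sq_abs, ← Real.rpow_two, ← Real.rpow_mul (abs_nonneg _)]; congr 1; field_simp
  have hc : Real.HolderConjugate (p / (p - 2)) (p / 2) := by
    rw [Real.holderConjugate_iff]
    constructor
    · rw [lt_div_iff₀ hp2]; linarith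
    · field_simp; ring
  have hm1 : AEStronglyMeasurable (fun z => |u z| ^ (p - 2)) μ :=
    (continuous_abs.rpow_const (fun _ => Or.inr hp2.le)).comp_aestronglyMeasurable hu.1
  have h1 : MemLp (fun z => |u z| ^ (p - 2)) (ENNReal.ofReal (p / (p - 2))) μ := by
    have hq : 0 < p / (p - 2) := by positivity
    rw [← integrable_norm_rpow_iff hm1 (by simpa using hq) (by simp),
      ENNReal.toReal_ofReal hq.le]
    refine (integrable_abs_rpow hp hu).congr (Eventually.of_forall fun z => ?_)
    simp only
    rw [Real.norm_of_nonneg (by positivity), hpow1]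
  have h2 : MemLp (fun z => v z ^ 2) (ENNReal.ofReal (p / 2)) μ := by
    have hq : 0 < p / 2 := by positivity
    have hm2 : AEStronglyMeasurable (fun z => v z ^ 2) μ := hv.1.pow 2
    rw [← integrable_norm_rpow_iff hm2 (by simpa using hq) (by simp),
      ENNReal.toReal_ofReal hq.le]
    refine (integrable_abs_rpow hp hv).congr (Eventually.of_forall fun z => ?_)
    simp only
    rw [Real.norm_of_nonneg (by positivity), hpow2]
  have h := integral_mul_le_Lp_mul_Lq_of_nonneg hc
    (Eventually.of_forall fun z => by simp only [Pi.zero_apply]; positivity)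
    (Eventually.of_forall fun z => by simp only [Pi.zero_apply]; positivity) h1 h2
  simp only [hpow1, hpow2] at h
  have e1 : 1 / (p / (p - 2)) = 1 - 2 / p := by field_simp
  have e2 : 1 / (p / 2) = 2 / p := by field_simp
  rwa [e1, e2] at h

/-- If the loss vanishes at `t₀`, it is a pure power of `|t - t₀|`. -/
lemma degenerate_eq (hp : 2 ≤ p) (hu : MemLp u (ENNReal.ofReal p) μ)
    (hv : MemLp v (ENNReal.ofReal p) μ) {t₀ : ℝ} (h0 : ∫ z, |u z + t₀ * v z| ^ p ∂μ = 0)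
    (t : ℝ) :
    (∫ z, |u z + t * v z| ^ p ∂μ) ^ (2 / p) = (t - t₀) ^ 2 * (∫ z, |v z| ^ p ∂μ) ^ (2 / p) := by
  have hp0 : 0 < p := by linarith
  have hI : Integrable (fun z => |u z + t₀ * v z| ^ p) μ :=
    integrable_abs_rpow hp (hu.add (hv.const_mul t₀))
  rw [integral_eq_zero_iff_of_nonneg (fun z => by simp only [Pi.zero_apply]; positivity) hI] at h0
  have h : ∫ z, |u z + t * v z| ^ p ∂μ = |t - t₀| ^ p * ∫ z, |v z| ^ p ∂μ := by
    rw [← integral_const_mul]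
    refine integral_congr_ae ?_
    filter_upwards [h0] with z hz
    simp only [Pi.zero_apply] at hz
    rw [Real.rpow_eq_zero (abs_nonneg _) hp0.ne', abs_eq_zero] at hz
    rw [← Real.mul_rpow (abs_nonneg _) (abs_nonneg _), ← abs_mul]
    congr 2
    linarith
  rw [h, Real.mul_rpow (by positivity) (integral_nonneg fun z => by positivity),
    ← Real.rpow_mul (abs_nonneg _), mul_div_cancel₀ _ hp0.ne', Real.rpow_two, sq_abs]

theorem second_derivative (hp : 2 ≤ p) (hu : MemLp u (ENNReal.ofReal p) μ)
    (hv : MemLp v (ENNReal.ofReal p) μ) :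
    ∃ d1 d2 : ℝ → ℝ,
      (∀ t : ℝ, HasDerivAt
        (fun t : ℝ => (∫ z, |u z + t * v z| ^ p ∂μ) ^ (2 / p) / (2 * (p - 1))) (d1 t) t) ∧
      (∀ t : ℝ, HasDerivAt d1 (d2 t) t) ∧
      (∀ h : ℝ, d2 h ≤ (∫ z, |v z| ^ p ∂μ) ^ (2 / p)) := by
  have hp0 : 0 < p := by linarith
  have hp1 : 0 < p - 1 := by linarith
  by_cases hz : ∃ t₀ : ℝ, ∫ z, |u z + t₀ * v z| ^ p ∂μ = 0
  · obtain ⟨t₀, h0⟩ := hz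
    simp only [degenerate_eq hp hu hv h0]
    have hG : 0 ≤ (∫ z, |v z| ^ p ∂μ) ^ (2 / p) :=
      Real.rpow_nonneg (integral_nonneg fun z => by positivity) _
    set K := (∫ z, |v z| ^ p ∂μ) ^ (2 / p)
    refine ⟨fun t => (t - t₀) * (K / (p - 1)), fun _ => K / (p - 1), fun t => ?_, fun t => ?_,
      fun _ => div_le_self hG (by linarith)⟩
    · refine (((((hasDerivAt_id t).sub_const t₀).pow 2).mul_const K).div_const _).congr_deriv ?_
      simp only [id]
      field_simp
      norm_num
      ring
    · simpa using ((hasDerivAt_id t).sub_const t₀).mul_const (K / (p - 1))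
  · push Not at hz
    set F : ℝ → ℝ := fun t => ∫ z, |u z + t * v z| ^ p ∂μ with hF
    set F1 : ℝ → ℝ := fun t => ∫ z, |u z + t * v z| ^ (p - 2) * (u z + t * v z) * v z ∂μ with hF1
    set F2 : ℝ → ℝ := fun t => ∫ z, |u z + t * v z| ^ (p - 2) * v z ^ 2 ∂μ with hF2
    have hFpos : ∀ t, 0 < F t := fun t =>
      lt_of_le_of_ne (integral_nonneg fun z => by positivity) (hz t).symm
    have hd1 : ∀ t, HasDerivAt F (p * F1 t) t := hasDerivAt_F hp hu hv
    have hd2 : ∀ t, HasDerivAt F1 ((p - 1) * F2 t) t := hasDerivAt_F1 hp hu hv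
    refine ⟨fun t => F t ^ (2 / p - 1) * F1 t / (p - 1),
      fun t => (p * F1 t * (2 / p - 1) * F t ^ (2 / p - 1 - 1) * F1 t
        + F t ^ (2 / p - 1) * ((p - 1) * F2 t)) / (p - 1), fun t => ?_, fun t => ?_, fun t => ?_⟩
    · refine (((hd1 t).rpow_const (p := 2 / p) (Or.inl (hFpos t).ne')).div_const _).congr_deriv ?_
      field_simp
    · exact (((hd1 t).rpow_const (p := 2 / p - 1) (Or.inl (hFpos t).ne')).mul (hd2 t)).div_const _
    · have hneg : p * F1 t * (2 / p - 1) * F t ^ (2 / p - 1 - 1) * F1 t ≤ 0 := by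
        have e : p * F1 t * (2 / p - 1) * F t ^ (2 / p - 1 - 1) * F1 t
            = -((p - 2) * (F1 t ^ 2 * F t ^ (2 / p - 1 - 1))) := by
          have : p * (2 / p - 1) = -(p - 2) := by field_simp; ring
          linear_combination (F1 t ^ 2 * F t ^ (2 / p - 1 - 1)) * this
        rw [e, neg_nonpos]
        have := Real.rpow_nonneg (hFpos t).le (2 / p - 1 - 1)
        exact mul_nonneg (by linarith) (by positivity)
      have hH : F2 t ≤ F t ^ (1 - 2 / p) * (∫ z, |v z| ^ p ∂μ) ^ (2 / p) :=
        holder_bound hp (hu.add (hv.const_mul t)) hv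
      have hmul : F t ^ (2 / p - 1) * F2 t ≤ (∫ z, |v z| ^ p ∂μ) ^ (2 / p) := by
        calc F t ^ (2 / p - 1) * F2 t
            ≤ F t ^ (2 / p - 1) * (F t ^ (1 - 2 / p) * (∫ z, |v z| ^ p ∂μ) ^ (2 / p)) :=
              mul_le_mul_of_nonneg_left hH (Real.rpow_nonneg (hFpos t).le _)
          _ = _ := by
              rw [← mul_assoc, ← Real.rpow_add (hFpos t)]
              simp
      rw [div_le_iff₀ hp1]
      nlinarith

end

end PNormLoss

/-- Section A.1.5: second-derivative bound for the `p`-norm loss (`p ≥ 2`). With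
`A f = (E |f(X) - Y|^p)^{2/p} / (2(p-1))`, `E|Y|^p < ∞` and `sup_{g ∈ S} E|g(X)|^p ≤ 1`,
for every `f` in the span of `S` and `g ∈ S`, the function `t ↦ A (f + t g)` is twice
differentiable and its second derivative at every `h ∈ ℝ` is at most
`(E|g(X)|^p)^{2/p} ≤ 1`. -/
theorem pnorm_loss_second_derivative {X : Type*} [MeasurableSpace X]
    (p : ℝ) (hp : 2 ≤ p)
    (S : Set (X → ℝ))
    (hSmeas : ∀ g ∈ S, Measurable g)
    (D : Measure (X × ℝ)) [IsProbabilityMeasure D]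
    (hY : Integrable (fun z : X × ℝ => |z.2| ^ p) D)
    (hSInt : ∀ g ∈ S, Integrable (fun z : X × ℝ => |g z.1| ^ p) D)
    (hSbd : ∀ g ∈ S, (∫ z, |g z.1| ^ p ∂D) ≤ 1)
    (f : X → ℝ) (hf : f ∈ Submodule.span ℝ S) (g : X → ℝ) (hg : g ∈ S) :
    ∃ d1 d2 : ℝ → ℝ,
      (∀ t : ℝ, HasDerivAt
        (fun u : ℝ => (∫ z, |(f + u • g) z.1 - z.2| ^ p ∂D) ^ (2 / p) / (2 * (p - 1)))
        (d1 t) t) ∧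
      (∀ t : ℝ, HasDerivAt d1 (d2 t) t) ∧
      (∀ h : ℝ, d2 h ≤ (∫ z, |g z.1| ^ p ∂D) ^ (2 / p)) ∧
      (∫ z, |g z.1| ^ p ∂D) ^ (2 / p) ≤ 1 := by
  have hspan : MemLp (fun z : X × ℝ => f z.1) (ENNReal.ofReal p) D := by
    induction hf using Submodule.span_induction with
    | mem k hk =>
      exact PNormLoss.memLp_of_integrable hp
        ((hSmeas k hk).comp measurable_fst).aestronglyMeasurable (hSInt k hk)
    | zero => exact MemLp.zero
    | add a b _ _ ha hb => exact ha.add hb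
    | smul c a _ ha => exact ha.const_mul c
  have hYp : MemLp (fun z : X × ℝ => z.2) (ENNReal.ofReal p) D :=
    PNormLoss.memLp_of_integrable hp measurable_snd.aestronglyMeasurable hY
  have hgp : MemLp (fun z : X × ℝ => g z.1) (ENNReal.ofReal p) D :=
    PNormLoss.memLp_of_integrable hp
      ((hSmeas g hg).comp measurable_fst).aestronglyMeasurable (hSInt g hg)
  obtain ⟨d1, d2, h1, h2, h3⟩ := PNormLoss.second_derivative hp (hspan.sub hYp) hgp
  refine ⟨d1, d2, fun t => ?_, h2, h3, ?_⟩
  · have e : ∀ (s : ℝ) (z : X × ℝ), (f + s • g) z.1 - z.2 = f z.1 - z.2 + s * g z.1 := by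
      intro s z
      simp only [Pi.add_apply, Pi.smul_apply, smul_eq_mul]
      ring
    simp only [e]
    exact h1 t
  · exact Real.rpow_le_one (integral_nonneg fun z => by positivity) (hSbd g hg) (by positivity)
end
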